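/- arXiv:2310.12680 — 2 statements merged into one kernel-verified Lean document; each statement's English description precedes it below -/
import Mathlib

section
/- Bounds under good initialization: assume the bounded-data assumption, suppose θ̃^(0) is a good initialization with parameters (B2, BΦ, γ) with respect to (X_i, y_i)_{i∈[n]}, fix K ≥ 1, set g0 := (2BΦ + log K)/γ, and suppose √H ≥ 256 d √(T d) R³ B2 (3 √d R² (4 g0 + B2) + 1) · g0². Define α(K) := 3 d √d R² [3 √T R³ (4 g0 + B2) + 2 √T R] and ρ(K) := (2 d √(T d) R³/√H + T R²/4) · α(K)². Then for any step size η ≤ min{1, 1/ρ(K), 4BΦ²/(γ² · log(1 + e^{BΦ}))}, the gradient-descent iterates satisfy the training bound L̂(θ̃^(K)) ≤ 2/K + 5(2BΦ + log K)²/(4 γ² η K); moreover, if the training samples are drawn i.i.d. from a distribution D and the good-initialization properties and the bounded-data assumption hold almost surely over the training set, then E[L(θ̃^(K)) − L̂(θ̃^(K))] ≤ 17 (2BΦ + log K)²/(γ² η n). -/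
/-!
Write `z = (X, y)` for a sample, `mar z θ = y Φ̃(X; θ)` for its margin and `lg` for the logistic
loss, so that the empirical risk is an average `pl` of `lg ∘ mar`.

**Attention.** Along a line in parameter space every row of every head is a softmax expectation
whose logits and values move linearly. Its first derivative is a covariance and its second a
third-order cumulant under the softmax law. Bounding these and summing over heads by
Cauchy-Schwarz shows (`reg_mar`) that on the ball of radius `4g₀` around `θ̃⁰` the margins are
`G`-Lipschitz with `κ`-Lipschitz gradient, where `κ` carries a factor `1/√H`. The width condition
gives `κ g₀² ≤ 1/128` and the step-size condition gives `η G² ≤ 1/5` and `η κ ≤ 1/2`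
(`step_constants`).

**Training.** Because the derivative of `lg` is at most `lg` in absolute value, the
curvature defect of the risk at `θ` is at most `κ` times the risk at `θ` (`weak_convex`). Separability provides the comparator `θ̃⁰ + g₀ θ̃⋆`, at distance `√2 g₀`
and with risk at most `1/K`. The squared distance to the comparator plus the accumulated risk is
then a controlled potential (`gd_potential`): the iterates stay in the ball, and the accumulated
risk is at most `(5/4)(1 + g₀²/η)`. Since the risk decreases along the iterates, dividing by `K`
gives the training bound (`gd_train`).

**Generalization.** The logistic derivative is monotone and `1/4`-Lipschitz, hence cocoercive, and
a gradient step expands distances only by `1 + O(ηκ · risk)` (`expand_sq`). Since `η κ` times the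
accumulated risk is bounded by a small constant, replacing the sample `i` moves the last iterate by
at most `2ηG/n` times the losses accumulated on the two exchanged samples (`gd_stability`).
Exchanging a training sample with a fresh one preserves the product measure
(`measurePreserving_swp`), which turns this stability into a bound of the expected generalization
gap by `(4ηG²/n)` times the expected accumulated risk (`gen_of_stability`, `gen_bound`), hence by
`2 g₀²/(η n)`.
-/

open Finset
open scoped RealInnerProductSpace

/-- The softmax map `φ : ℝ^T → ℝ^T`, `φ(v)_t = exp(v_t) / Σ_s exp(v_s)`. -/
noncomputable def smax {T : ℕ} (v : Fin T → ℝ) : Fin T → ℝ :=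
  fun t => Real.exp (v t) / ∑ s, Real.exp (v s)

/-- The softmax logits: the `(t, s)` entry of `X W Xᵀ`, i.e. `xₜᵀ W x_s`. -/
noncomputable def attnScores {T d : ℕ} (X : Fin T → Fin d → ℝ)
    (W : Fin d → Fin d → ℝ) (t : Fin T) : Fin T → ℝ :=
  fun s => ∑ j, ∑ k, X t j * W j k * X s k

/-- The single-head attention model `Φ(X; U, W) = ⟨U, φ(X W Xᵀ) X⟩`. -/
noncomputable def attnPhi {T d : ℕ} (X U : Fin T → Fin d → ℝ)
    (W : Fin d → Fin d → ℝ) : ℝ :=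
  ∑ t, ∑ t', smax (attnScores X W t) t' * ∑ j, U t j * X t' j

/-- Index set for the parameters `θ_h = concat(U_h, W_h) ∈ ℝ^{Td + d²}` of one head. -/
abbrev HeadIx (T d : ℕ) := (Fin T × Fin d) ⊕ (Fin d × Fin d)

/-- Parameter space `ℝ^{H(Td + d²)}` of the `H`-head model, with Euclidean norm. -/
abbrev Params (T d H : ℕ) := EuclideanSpace ℝ (Fin H × HeadIx T d)

/-- The matrix `U_h` of the `h`-th head. -/
noncomputable def headU {T d H : ℕ} (θ : Params T d H) (h : Fin H) :
    Fin T → Fin d → ℝ := fun t j => θ (h, Sum.inl (t, j))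

/-- The matrix `W_h` of the `h`-th head. -/
noncomputable def headW {T d H : ℕ} (θ : Params T d H) (h : Fin H) :
    Fin d → Fin d → ℝ := fun j k => θ (h, Sum.inr (j, k))

/-- The multi-head attention model `Φ̃(X; θ̃) = (1/√H) Σ_h Φ(X; U_h, W_h)`. -/
noncomputable def mhPhi {T d H : ℕ} (X : Fin T → Fin d → ℝ) (θ : Params T d H) : ℝ :=
  (1 / Real.sqrt H) * ∑ h, attnPhi X (headU θ h) (headW θ h)

/-- The logistic empirical risk `L̂(θ̃) = (1/n) Σᵢ log(1 + exp(−yᵢ Φ̃(Xᵢ; θ̃)))`. -/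
noncomputable def empLoss {T d H n : ℕ} (X : Fin n → Fin T → Fin d → ℝ)
    (y : Fin n → ℝ) (θ : Params T d H) : ℝ :=
  (1 / (n : ℝ)) * ∑ i, Real.log (1 + Real.exp (-(y i * mhPhi (X i) θ)))

/-- `‖θ̃‖_{2,∞} = max_h ‖θ_h‖`: the maximum Euclidean norm over heads. -/
noncomputable def maxHeadNorm {T d H : ℕ} (θ : Params T d H) : ℝ :=
  ⨆ h : Fin H, Real.sqrt (∑ p : HeadIx T d, θ (h, p) ^ 2)

/-- Bounded-data assumption: `R ≥ 1`, labels in `{±1}`, and every token has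
Euclidean norm at most `R`. -/
def BoundedData {T d n : ℕ} (X : Fin n → Fin T → Fin d → ℝ)
    (y : Fin n → ℝ) (R : ℝ) : Prop :=
  1 ≤ R ∧ (∀ i, y i = 1 ∨ y i = -1) ∧
    ∀ i t, Real.sqrt (∑ j, X i t j ^ 2) ≤ R

/-- `β₁(θ̃) = √T R (2R² ‖θ̃‖_{2,∞} + 1)`. -/
noncomputable def beta1 {T d H : ℕ} (R : ℝ) (θ : Params T d H) : ℝ :=
  Real.sqrt T * R * (2 * R ^ 2 * maxHeadNorm θ + 1)

/-- `β₃(θ̃) = 2 d √(T d) R³ (3 √d R² ‖θ̃‖_{2,∞} + 1)`. -/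
noncomputable def beta3 {T d H : ℕ} (R : ℝ) (θ : Params T d H) : ℝ :=
  2 * (d : ℝ) * Real.sqrt ((T : ℝ) * d) * R ^ 3 *
    (3 * Real.sqrt d * R ^ 2 * maxHeadNorm θ + 1)

open MeasureTheory

/-- The test (population) loss `L(θ̃) = E_{(X,y)∼D}[log(1 + exp(−y Φ̃(X; θ̃)))]`. -/
noncomputable def testLoss {T d H : ℕ}
    (D : Measure ((Fin T → Fin d → ℝ) × ℝ)) (θ : Params T d H) : ℝ :=
  ∫ z, Real.log (1 + Real.exp (-(z.2 * mhPhi z.1 θ))) ∂D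

/-- Good initialization with parameters `(B₂, BΦ, γ)` for training data
`(Xᵢ, yᵢ)_{i∈[n]}`: (P1) each head of `θ̃⁰` has norm at most `B₂ ≥ 1`;
(P2) the model output at initialization satisfies `|Φ̃(Xᵢ; θ̃⁰)| ≤ BΦ` with `BΦ ≥ 1`;
(P3) NTK separability: there is `θ̃⋆` with `‖θ̃⋆‖ = √2` and
`yᵢ ⟨∇Φ̃(Xᵢ; θ̃⁰), θ̃⋆⟩ ≥ γ > 0` for all `i`. -/
def GoodInit {T d H n : ℕ} (X : Fin n → Fin T → Fin d → ℝ) (y : Fin n → ℝ)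
    (θ0 : Params T d H) (B2 BΦ γ : ℝ) : Prop :=
  1 ≤ B2 ∧ 1 ≤ BΦ ∧ 0 < γ ∧
  (∀ h : Fin H, Real.sqrt (∑ p : HeadIx T d, θ0 (h, p) ^ 2) ≤ B2) ∧
  (∀ i, |mhPhi (X i) θ0| ≤ BΦ) ∧
  ∃ θstar : Params T d H, ‖θstar‖ = Real.sqrt 2 ∧
    ∀ i, γ ≤ y i * ⟪gradient (fun θ => mhPhi (X i) θ) θ0, θstar⟫

set_option linter.unusedSectionVars false

/-! ### The logistic loss and risks with regular margins -/

namespace MHBounds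

/-- The logistic loss as a function of the margin. -/
noncomputable def lg (z : ℝ) : ℝ := Real.log (1 + Real.exp (-z))

/-- The negative derivative of the logistic loss, `1 / (1 + e^z)`. -/
noncomputable def wt (z : ℝ) : ℝ := 1 / (1 + Real.exp z)

lemma wt_pos (z : ℝ) : 0 < wt z := by unfold wt; positivity

lemma wt_le_one (z : ℝ) : wt z ≤ 1 := by
  unfold wt
  rw [div_le_one (by positivity)]
  linarith [Real.exp_pos z]

lemma wt_le_lg (z : ℝ) : wt z ≤ lg z := by
  have h := Real.one_sub_inv_le_log_of_pos (x := 1 + Real.exp (-z)) (by positivity)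
  refine le_trans (le_of_eq ?_) h
  unfold wt
  rw [Real.exp_neg]
  have := Real.exp_pos z
  field_simp
  ring

lemma lg_pos (z : ℝ) : 0 < lg z := (wt_pos z).trans_le (wt_le_lg z)

lemma lg_le_exp (z : ℝ) : lg z ≤ Real.exp (-z) := by
  have h := Real.log_le_sub_one_of_pos (x := 1 + Real.exp (-z)) (by positivity)
  unfold lg
  linarith

lemma hasDerivAt_lg (z : ℝ) : HasDerivAt lg (-wt z) z := by
  have h1 : HasDerivAt (fun z : ℝ => 1 + Real.exp (-z)) (Real.exp (-z) * (-1)) z :=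
    ((hasDerivAt_neg z).exp).const_add 1
  have h := h1.log (by positivity)
  have e : -wt z = Real.exp (-z) * (-1) / (1 + Real.exp (-z)) := by
    unfold wt
    rw [Real.exp_neg]
    have := Real.exp_pos z
    field_simp
    ring
  rw [e]
  exact h

lemma hasDerivAt_wt (z : ℝ) : HasDerivAt wt (-(wt z * (1 - wt z))) z := by
  have h1 : HasDerivAt (fun z : ℝ => 1 + Real.exp z) (Real.exp z) z :=
    (Real.hasDerivAt_exp z).const_add 1
  have h := h1.inv (by positivity)
  have e : wt = (fun z : ℝ => 1 + Real.exp z)⁻¹ := by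
    funext z; simp [wt]
  have e2 : -(wt z * (1 - wt z)) = -Real.exp z / (1 + Real.exp z) ^ 2 := by
    unfold wt
    have := Real.exp_pos z
    field_simp
    ring
  rw [e2, e]
  exact h

lemma wt_anti : Antitone wt := by
  intro a b h
  unfold wt
  have := Real.exp_le_exp.2 h
  have := Real.exp_pos a
  gcongr

lemma wt_lip (a b : ℝ) : |wt b - wt a| ≤ 1 / 4 * |b - a| := by
  have := Convex.norm_image_sub_le_of_norm_hasDerivWithin_le (f := wt)
    (f' := fun z => -(wt z * (1 - wt z))) (s := Set.univ) (x := a) (y := b) (C := 1 / 4)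
    (fun x _ => (hasDerivAt_wt x).hasDerivWithinAt)
    (fun x _ => by
      rw [norm_neg, Real.norm_eq_abs, abs_le]
      constructor <;> nlinarith [wt_pos x, wt_le_one x, sq_nonneg (wt x - 1 / 2)])
    convex_univ trivial trivial
  simpa [Real.norm_eq_abs] using this

/-- Cocoercivity of the logistic derivative: it is decreasing and `1/4`-Lipschitz. -/
lemma wt_coco (a b : ℝ) : 4 * (wt a - wt b) ^ 2 ≤ -((wt a - wt b) * (a - b)) := by
  have h := wt_lip a b
  rcases le_total a b with hab | hab
  · have h1 := wt_anti hab
    rw [abs_of_nonpos (by linarith), abs_of_nonneg (by linarith)] at h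
    nlinarith
  · have h1 := wt_anti hab
    rw [abs_of_nonneg (by linarith), abs_of_nonpos (by linarith)] at h
    nlinarith

lemma lg_mvt (a b : ℝ) : ∃ c, lg b - lg a = -wt c * (b - a) ∧
    |c - a| ≤ |b - a| ∧ 0 ≤ (c - a) * (b - a) := by
  have hc : Continuous lg :=
    continuous_iff_continuousAt.2 fun x => (hasDerivAt_lg x).continuousAt
  rcases lt_trichotomy a b with hab | hab | hab
  · obtain ⟨c, hc1, hc2⟩ := exists_hasDerivAt_eq_slope lg (fun z => -wt z) hab
      hc.continuousOn (fun x _ => hasDerivAt_lg x)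
    refine ⟨c, ?_, ?_, ?_⟩
    · rw [hc2]; field_simp [sub_ne_zero.2 hab.ne']
    · rw [abs_of_pos (by linarith [hc1.1]), abs_of_pos (by linarith)]; linarith [hc1.2]
    · nlinarith [hc1.1]
  · subst hab; exact ⟨a, by simp⟩
  · obtain ⟨c, hc1, hc2⟩ := exists_hasDerivAt_eq_slope lg (fun z => -wt z) hab
      hc.continuousOn (fun x _ => hasDerivAt_lg x)
    refine ⟨c, ?_, ?_, ?_⟩
    · have : (a - b) ≠ 0 := sub_ne_zero.2 hab.ne'
      have h3 : -wt c * (a - b) = lg a - lg b := by rw [hc2]; field_simp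
      linarith
    · rw [abs_of_neg (by linarith [hc1.2]), abs_of_neg (by linarith)]; linarith [hc1.1]
    · nlinarith [hc1.2]

lemma lg_convex (a b : ℝ) : lg a - wt a * (b - a) ≤ lg b := by
  obtain ⟨c, h1, h2, h3⟩ := lg_mvt a b
  rcases lt_trichotomy a b with hab | hab | hab
  · have : a ≤ c := by nlinarith
    nlinarith [wt_anti this]
  · subst hab; simp
  · have : c ≤ a := by nlinarith
    nlinarith [wt_anti this]

lemma lg_smooth (a b : ℝ) : lg b ≤ lg a - wt a * (b - a) + (b - a) ^ 2 / 4 := by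
  obtain ⟨c, h1, h2, -⟩ := lg_mvt a b
  have h4 : |(wt c - wt a) * (b - a)| ≤ 1 / 4 * |b - a| * |b - a| := by
    rw [abs_mul]
    have := wt_lip a c
    gcongr
    linarith
  rw [mul_assoc, abs_mul_abs_self] at h4
  have := (abs_le.1 h4).1
  nlinarith

lemma lg_lip (a b : ℝ) : |lg b - lg a| ≤ |b - a| := by
  obtain ⟨c, h1, -⟩ := lg_mvt a b
  rw [h1, abs_mul, abs_neg, abs_of_pos (wt_pos c)]
  exact mul_le_of_le_one_left (abs_nonneg _) (wt_le_one c)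

variable {E : Type*} [NormedAddCommGroup E] [InnerProductSpace ℝ E]

/-- Local regularity of a margin function `f` with gradient `g` on `S`: the gradient is bounded
by `G` and `κ`-Lipschitz, with the resulting increment and first-order Taylor bounds (the Taylor
constant is `κ` rather than `κ / 2`). -/
structure Reg (f : E → ℝ) (g : E → E) (S : Set E) (G κ : ℝ) : Prop where
  grad : ∀ a ∈ S, ‖g a‖ ≤ G
  gradLip : ∀ a ∈ S, ∀ b ∈ S, ‖g a - g b‖ ≤ κ * ‖a - b‖
  lip : ∀ a ∈ S, ∀ b ∈ S, |f b - f a| ≤ G * ‖b - a‖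
  taylor : ∀ a ∈ S, ∀ b ∈ S, |f b - f a - ⟪g a, b - a⟫| ≤ κ * ‖b - a‖ ^ 2

variable {Z : Type*} {n : ℕ}

/-- Empirical logistic risk of the margins `F z` over the samples `ω i` with `i ∈ s`,
normalised by the full sample size `n`. -/
noncomputable def pl (F : Z → E → ℝ) (ω : Fin n → Z) (s : Finset (Fin n)) (θ : E) : ℝ :=
  (1 / (n : ℝ)) * ∑ i ∈ s, lg (F (ω i) θ)

/-- Gradient of `pl`, given gradients `g z` of the margins. -/
noncomputable def pg (F : Z → E → ℝ) (g : Z → E → E) (ω : Fin n → Z) (s : Finset (Fin n))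
    (θ : E) : E :=
  -((1 / (n : ℝ)) • ∑ i ∈ s, wt (F (ω i) θ) • g (ω i) θ)

lemma pl_nonneg (F : Z → E → ℝ) (ω : Fin n → Z) (s : Finset (Fin n)) (θ : E) :
    0 ≤ pl F ω s θ :=
  mul_nonneg (by positivity) (sum_nonneg fun _ _ => (lg_pos _).le)

lemma pl_mono (F : Z → E → ℝ) (ω : Fin n → Z) {s t : Finset (Fin n)} (h : s ⊆ t) (θ : E) :
    pl F ω s θ ≤ pl F ω t θ :=
  mul_le_mul_of_nonneg_left
    (sum_le_sum_of_subset_of_nonneg h fun _ _ _ => (lg_pos _).le) (by positivity)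

lemma inner_pg (F : Z → E → ℝ) (g : Z → E → E) (ω : Fin n → Z) (s : Finset (Fin n)) (θ v : E) :
    ⟪pg F g ω s θ, v⟫ = -((1 / (n : ℝ)) * ∑ i ∈ s, wt (F (ω i) θ) * ⟪g (ω i) θ, v⟫) := by
  simp [pg, inner_neg_left, real_inner_smul_left, sum_inner]

section Reg

variable {F : Z → E → ℝ} {g : Z → E → E} {S : Set E} {G κ : ℝ} {ω : Fin n → Z}
  {s : Finset (Fin n)}

/-- Self-bounded weak convexity: the curvature defect at `a` is proportional to the loss there. -/
lemma weak_convex (hκ : 0 ≤ κ) (hF : ∀ i, Reg (F (ω i)) (g (ω i)) S G κ) {a b : E}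
    (ha : a ∈ S) (hb : b ∈ S) :
    pl F ω s a + ⟪pg F g ω s a, b - a⟫ - κ * pl F ω s a * ‖b - a‖ ^ 2 ≤ pl F ω s b := by
  rw [inner_pg]
  have key : ∑ i ∈ s, (lg (F (ω i) a) - wt (F (ω i) a) * ⟪g (ω i) a, b - a⟫
      - κ * lg (F (ω i) a) * ‖b - a‖ ^ 2) ≤ ∑ i ∈ s, lg (F (ω i) b) := by
    refine sum_le_sum fun i _ => ?_
    have h1 := lg_convex (F (ω i) a) (F (ω i) b)
    have h2 := (abs_le.1 ((hF i).taylor a ha b hb)).2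
    have h3 : wt (F (ω i) a) * (F (ω i) b - F (ω i) a) ≤
        wt (F (ω i) a) * (⟪g (ω i) a, b - a⟫ + κ * ‖b - a‖ ^ 2) :=
      mul_le_mul_of_nonneg_left (by linarith) (wt_pos _).le
    have h4 : wt (F (ω i) a) * (κ * ‖b - a‖ ^ 2) ≤ lg (F (ω i) a) * (κ * ‖b - a‖ ^ 2) :=
      mul_le_mul_of_nonneg_right (wt_le_lg _) (by positivity)
    linarith
  have := mul_le_mul_of_nonneg_left key (show 0 ≤ 1 / (n : ℝ) by positivity)
  rw [sum_sub_distrib, sum_sub_distrib, ← sum_mul, ← mul_sum] at this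
  unfold pl
  linarith

/-- The average derivative weight is at most `1` and at most the loss, so its square is at most the
loss. -/
lemma avg_wt_sq (θ : E) :
    ((1 / (n : ℝ)) * ∑ i ∈ s, wt (F (ω i) θ)) ^ 2 ≤ pl F ω s θ ∧
      (1 / (n : ℝ)) * ∑ i ∈ s, wt (F (ω i) θ) ≤ 1 := by
  have h0 : 0 ≤ (1 / (n : ℝ)) * ∑ i ∈ s, wt (F (ω i) θ) :=
    mul_nonneg (by positivity) (sum_nonneg fun _ _ => (wt_pos _).le)
  have h1 : (1 / (n : ℝ)) * ∑ i ∈ s, wt (F (ω i) θ) ≤ pl F ω s θ :=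
    mul_le_mul_of_nonneg_left (sum_le_sum fun _ _ => wt_le_lg _) (by positivity)
  have h2 : (1 / (n : ℝ)) * ∑ i ∈ s, wt (F (ω i) θ) ≤ 1 := by
    have h3 : ∑ i ∈ s, wt (F (ω i) θ) ≤ n := by
      calc _ ≤ ∑ i ∈ s, (1 : ℝ) := sum_le_sum fun _ _ => wt_le_one _
        _ = s.card := by simp
        _ ≤ n := by exact_mod_cast (card_le_univ s).trans (by simp)
    rcases Nat.eq_zero_or_pos n with hn | hn
    · subst hn; simp
    · rw [one_div, inv_mul_le_iff₀ (by exact_mod_cast hn)]; linarith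
  exact ⟨by nlinarith, h2⟩

lemma pg_norm_sq (hF : ∀ i, Reg (F (ω i)) (g (ω i)) S G κ) {a : E} (ha : a ∈ S) :
    ‖pg F g ω s a‖ ^ 2 ≤ G ^ 2 * pl F ω s a := by
  have h1 : ‖pg F g ω s a‖ ≤ G * ((1 / (n : ℝ)) * ∑ i ∈ s, wt (F (ω i) a)) := by
    rw [pg, norm_neg, norm_smul, Real.norm_of_nonneg (by positivity), mul_left_comm]
    refine mul_le_mul_of_nonneg_left ?_ (by positivity)
    rw [mul_sum]
    refine (norm_sum_le _ _).trans (sum_le_sum fun i _ => ?_)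
    rw [norm_smul, Real.norm_of_nonneg (wt_pos _).le, mul_comm]
    exact mul_le_mul_of_nonneg_right ((hF i).grad a ha) (wt_pos _).le
  calc _ ≤ (G * ((1 / (n : ℝ)) * ∑ i ∈ s, wt (F (ω i) a))) ^ 2 := by gcongr
    _ = G ^ 2 * ((1 / (n : ℝ)) * ∑ i ∈ s, wt (F (ω i) a)) ^ 2 := by ring
    _ ≤ _ := by gcongr; exact (avg_wt_sq a).1

lemma card_avg_le (c : ℝ) (hc : 0 ≤ c) : (1 / (n : ℝ)) * ∑ _i ∈ s, c ≤ c := by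
  rw [sum_const, nsmul_eq_mul]
  rcases Nat.eq_zero_or_pos n with hn | hn
  · subst hn; simpa
  · have h1 : (s.card : ℝ) ≤ n := by exact_mod_cast (card_le_univ s).trans (by simp)
    have h2 : (0 : ℝ) < n := by exact_mod_cast hn
    rw [one_div, inv_mul_le_iff₀ h2]
    gcongr

lemma smooth_upper (hκ : 0 ≤ κ) (hF : ∀ i, Reg (F (ω i)) (g (ω i)) S G κ)
    {a b : E} (ha : a ∈ S) (hb : b ∈ S) :
    pl F ω s b ≤ pl F ω s a + ⟪pg F g ω s a, b - a⟫ + (κ + G ^ 2 / 4) * ‖b - a‖ ^ 2 := by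
  rw [inner_pg]
  have key : ∑ i ∈ s, lg (F (ω i) b) ≤
      ∑ i ∈ s, (lg (F (ω i) a) - wt (F (ω i) a) * ⟪g (ω i) a, b - a⟫
      + (κ + G ^ 2 / 4) * ‖b - a‖ ^ 2) := by
    refine sum_le_sum fun i _ => ?_
    have h1 := lg_smooth (F (ω i) a) (F (ω i) b)
    have h2 := (abs_le.1 ((hF i).taylor a ha b hb)).1
    have h3 : wt (F (ω i) a) * (⟪g (ω i) a, b - a⟫ - κ * ‖b - a‖ ^ 2) ≤
        wt (F (ω i) a) * (F (ω i) b - F (ω i) a) :=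
      mul_le_mul_of_nonneg_left (by linarith) (wt_pos _).le
    have h4 : wt (F (ω i) a) * (κ * ‖b - a‖ ^ 2) ≤ 1 * (κ * ‖b - a‖ ^ 2) :=
      mul_le_mul_of_nonneg_right (wt_le_one _) (by positivity)
    have h5 : (F (ω i) b - F (ω i) a) ^ 2 ≤ (G * ‖b - a‖) ^ 2 := by
      rw [← sq_abs]; gcongr; exact (hF i).lip a ha b hb
    nlinarith
  have := mul_le_mul_of_nonneg_left key (show 0 ≤ 1 / (n : ℝ) by positivity)
  have h6 := card_avg_le (n := n) (s := s) ((κ + G ^ 2 / 4) * ‖b - a‖ ^ 2) (by positivity)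
  rw [sum_add_distrib, sum_sub_distrib] at this
  unfold pl
  linarith

/-- Gradient descent is almost non-expansive: cocoercivity of the logistic derivative absorbs the
second-order term, and only the loss-weighted nonconvexity of the margins remains. -/
lemma expand_sq (hκ : 0 ≤ κ) {η : ℝ} (hη : 0 ≤ η) (hηG : η * G ^ 2 ≤ 1)
    (hηκ : η * κ ≤ 1) (hF : ∀ i, Reg (F (ω i)) (g (ω i)) S G κ)
    {u v : E} (hu : u ∈ S) (hv : v ∈ S) :
    ‖u - v - η • (pg F g ω s u - pg F g ω s v)‖ ^ 2 ≤
      (1 + 4 * (η * κ * (pl F ω s u + pl F ω s v))) * ‖u - v‖ ^ 2 := by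
  set Q : ℝ := (1 / (n : ℝ)) * ∑ i ∈ s, (wt (F (ω i) u) - wt (F (ω i) v)) ^ 2 with hQ
  have hQ0 : 0 ≤ Q := mul_nonneg (by positivity) (sum_nonneg fun _ _ => sq_nonneg _)
  have hPu := pl_nonneg F ω s u
  have hPv := pl_nonneg F ω s v
  -- monotonicity of the risk gradient: the gain `4 Q` comes from cocoercivity of the weights
  have hmono : 4 * Q - κ * (pl F ω s u + pl F ω s v) * ‖u - v‖ ^ 2 ≤
      ⟪u - v, pg F g ω s u - pg F g ω s v⟫ := by
    rw [real_inner_comm, inner_sub_left, inner_pg, inner_pg]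
    have key : ∑ i ∈ s, (4 * (wt (F (ω i) u) - wt (F (ω i) v)) ^ 2
        - (κ * ‖u - v‖ ^ 2) * (lg (F (ω i) u) + lg (F (ω i) v))) ≤
        ∑ i ∈ s, (-(wt (F (ω i) u) * ⟪g (ω i) u, u - v⟫)
          + wt (F (ω i) v) * ⟪g (ω i) v, u - v⟫) := by
      refine sum_le_sum fun i _ => ?_
      have h1 := wt_coco (F (ω i) u) (F (ω i) v)
      have h2 := (abs_le.1 ((hF i).taylor u hu v hv)).2
      have h3 := (abs_le.1 ((hF i).taylor v hv u hu)).2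
      have e : ⟪g (ω i) u, v - u⟫ = -⟪g (ω i) u, u - v⟫ := by
        rw [← inner_neg_right, neg_sub]
      rw [e, norm_sub_rev] at h2
      have h4 : wt (F (ω i) u) * (⟪g (ω i) u, u - v⟫) ≤
          wt (F (ω i) u) * (F (ω i) u - F (ω i) v + κ * ‖u - v‖ ^ 2) :=
        mul_le_mul_of_nonneg_left (by linarith) (wt_pos _).le
      have h5 : wt (F (ω i) v) * (F (ω i) u - F (ω i) v - κ * ‖u - v‖ ^ 2) ≤
          wt (F (ω i) v) * (⟪g (ω i) v, u - v⟫) :=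
        mul_le_mul_of_nonneg_left (by linarith) (wt_pos _).le
      have h6 : (κ * ‖u - v‖ ^ 2) * wt (F (ω i) u) ≤ (κ * ‖u - v‖ ^ 2) * lg (F (ω i) u) :=
        mul_le_mul_of_nonneg_left (wt_le_lg _) (by positivity)
      have h7 : (κ * ‖u - v‖ ^ 2) * wt (F (ω i) v) ≤ (κ * ‖u - v‖ ^ 2) * lg (F (ω i) v) :=
        mul_le_mul_of_nonneg_left (wt_le_lg _) (by positivity)
      linarith
    have := mul_le_mul_of_nonneg_left key (show 0 ≤ 1 / (n : ℝ) by positivity)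
    rw [sum_sub_distrib, ← mul_sum, ← mul_sum, sum_add_distrib, sum_add_distrib,
      sum_neg_distrib] at this
    rw [hQ]
    unfold pl
    linarith
  -- the change of the weights is controlled by `Q`, the change of the margin gradients by `κ`
  have hsplit : pg F g ω s u - pg F g ω s v =
      -((1 / (n : ℝ)) • ∑ i ∈ s, (wt (F (ω i) u) - wt (F (ω i) v)) • g (ω i) u)
      - ((1 / (n : ℝ)) • ∑ i ∈ s, wt (F (ω i) v) • (g (ω i) u - g (ω i) v)) := by
    simp only [pg, sub_smul, smul_sub, sum_sub_distrib]
    abel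
  have hA : ‖(1 / (n : ℝ)) • ∑ i ∈ s, (wt (F (ω i) u) - wt (F (ω i) v)) • g (ω i) u‖ ^ 2 ≤
      G ^ 2 * Q := by
    have h1 : ‖(1 / (n : ℝ)) • ∑ i ∈ s, (wt (F (ω i) u) - wt (F (ω i) v)) • g (ω i) u‖ ≤
        (1 / (n : ℝ)) * ∑ i ∈ s, |wt (F (ω i) u) - wt (F (ω i) v)| * G := by
      rw [norm_smul, Real.norm_of_nonneg (by positivity)]
      refine mul_le_mul_of_nonneg_left ?_ (by positivity)
      refine (norm_sum_le _ _).trans (sum_le_sum fun i _ => ?_)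
      rw [norm_smul, Real.norm_eq_abs]
      exact mul_le_mul_of_nonneg_left ((hF i).grad u hu) (abs_nonneg _)
    have h2 : (∑ i ∈ s, |wt (F (ω i) u) - wt (F (ω i) v)|) ^ 2 ≤
        s.card * ∑ i ∈ s, (wt (F (ω i) u) - wt (F (ω i) v)) ^ 2 := by
      simpa using sq_sum_le_card_mul_sum_sq (s := s)
        (f := fun i => |wt (F (ω i) u) - wt (F (ω i) v)|)
    have h3 : (s.card : ℝ) ≤ n := by exact_mod_cast (card_le_univ s).trans (by simp)
    have hS0 : 0 ≤ ∑ i ∈ s, (wt (F (ω i) u) - wt (F (ω i) v)) ^ 2 :=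
      sum_nonneg fun _ _ => sq_nonneg _
    calc _ ≤ ((1 / (n : ℝ)) * ∑ i ∈ s, |wt (F (ω i) u) - wt (F (ω i) v)| * G) ^ 2 := by gcongr
      _ = G ^ 2 * ((1 / (n : ℝ)) ^ 2 * (∑ i ∈ s, |wt (F (ω i) u) - wt (F (ω i) v)|) ^ 2) := by
        rw [← sum_mul]; ring
      _ ≤ G ^ 2 * ((1 / (n : ℝ)) ^ 2 *
          (n * ∑ i ∈ s, (wt (F (ω i) u) - wt (F (ω i) v)) ^ 2)) := by
        gcongr
        exact h2.trans (mul_le_mul_of_nonneg_right h3 hS0)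
      _ = G ^ 2 * Q := by
        rw [hQ]
        rcases Nat.eq_zero_or_pos n with hn | hn
        · subst hn; simp
        · have : (n : ℝ) ≠ 0 := by positivity
          field_simp
  have hB : ‖(1 / (n : ℝ)) • ∑ i ∈ s, wt (F (ω i) v) • (g (ω i) u - g (ω i) v)‖ ^ 2 ≤
      κ ^ 2 * pl F ω s v * ‖u - v‖ ^ 2 := by
    have h1 : ‖(1 / (n : ℝ)) • ∑ i ∈ s, wt (F (ω i) v) • (g (ω i) u - g (ω i) v)‖ ≤
        ((1 / (n : ℝ)) * ∑ i ∈ s, wt (F (ω i) v)) * (κ * ‖u - v‖) := by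
      rw [norm_smul, Real.norm_of_nonneg (by positivity), mul_assoc, sum_mul]
      refine mul_le_mul_of_nonneg_left ?_ (by positivity)
      refine (norm_sum_le _ _).trans (sum_le_sum fun i _ => ?_)
      rw [norm_smul, Real.norm_of_nonneg (wt_pos _).le]
      exact mul_le_mul_of_nonneg_left ((hF i).gradLip u hu v hv) (wt_pos _).le
    calc _ ≤ (((1 / (n : ℝ)) * ∑ i ∈ s, wt (F (ω i) v)) * (κ * ‖u - v‖)) ^ 2 := by gcongr
      _ = ((1 / (n : ℝ)) * ∑ i ∈ s, wt (F (ω i) v)) ^ 2 * (κ * ‖u - v‖) ^ 2 := by ring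
      _ ≤ pl F ω s v * (κ * ‖u - v‖) ^ 2 := by gcongr; exact (avg_wt_sq v).1
      _ = _ := by ring
  have hnorm : ‖pg F g ω s u - pg F g ω s v‖ ^ 2 ≤
      2 * (G ^ 2 * Q) + 2 * (κ ^ 2 * pl F ω s v * ‖u - v‖ ^ 2) := by
    rw [hsplit]
    set A := (1 / (n : ℝ)) • ∑ i ∈ s, (wt (F (ω i) u) - wt (F (ω i) v)) • g (ω i) u
    set B := (1 / (n : ℝ)) • ∑ i ∈ s, wt (F (ω i) v) • (g (ω i) u - g (ω i) v)
    have h1 : ‖-A - B‖ ≤ ‖A‖ + ‖B‖ := by simpa using norm_sub_le (-A) B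
    have h2 : ‖-A - B‖ ^ 2 ≤ (‖A‖ + ‖B‖) ^ 2 := by gcongr
    nlinarith [sq_nonneg (‖A‖ - ‖B‖)]
  rw [norm_sub_sq_real, norm_smul, Real.norm_of_nonneg hη, real_inner_smul_right, mul_pow]
  have e1 : η ^ 2 * ‖pg F g ω s u - pg F g ω s v‖ ^ 2 ≤
      2 * η * Q + 2 * (η * κ * pl F ω s v * ‖u - v‖ ^ 2) := by
    calc _ ≤ η ^ 2 * (2 * (G ^ 2 * Q) + 2 * (κ ^ 2 * pl F ω s v * ‖u - v‖ ^ 2)) := by gcongr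
      _ = (η * G ^ 2) * (2 * η * Q) + (η * κ) * (2 * (η * κ * pl F ω s v * ‖u - v‖ ^ 2)) := by
        ring
      _ ≤ 1 * (2 * η * Q) + 1 * (2 * (η * κ * pl F ω s v * ‖u - v‖ ^ 2)) := by gcongr
      _ = _ := by ring
  have e2 := mul_le_mul_of_nonneg_left hmono hη
  have e3 : 0 ≤ η * Q := by positivity
  have e4 : 0 ≤ η * κ * pl F ω s u * ‖u - v‖ ^ 2 := by positivity
  linarith

lemma expand (hκ : 0 ≤ κ) {η : ℝ} (hη : 0 ≤ η) (hηG : η * G ^ 2 ≤ 1)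
    (hηκ : η * κ ≤ 1) (hF : ∀ i, Reg (F (ω i)) (g (ω i)) S G κ)
    {u v : E} (hu : u ∈ S) (hv : v ∈ S) :
    ‖u - v - η • (pg F g ω s u - pg F g ω s v)‖ ≤
      Real.exp (2 * (η * κ * (pl F ω s u + pl F ω s v))) * ‖u - v‖ := by
  refine le_of_sq_le_sq ?_ (by positivity)
  refine (expand_sq hκ hη hηG hηκ hF hu hv).trans ?_
  rw [mul_pow, ← Real.exp_nat_mul]
  gcongr
  have := Real.add_one_le_exp (4 * (η * κ * (pl F ω s u + pl F ω s v)))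
  calc _ ≤ _ := by linarith
    _ = _ := by congr 1; push_cast; ring

end Reg

end MHBounds

/-! ### Gradient descent: training and stability -/

namespace MHBounds

section GD

variable {E : Type*} [NormedAddCommGroup E] [InnerProductSpace ℝ E] {Z : Type*} {n : ℕ}
  {F : Z → E → ℝ} {g : Z → E → E} {G κ η g0 : ℝ} {ω : Fin n → Z} {θ0 : E} {K : ℕ} {θ : ℕ → E}

/-- The potential argument: the squared distance to the comparator `a` plus the accumulated loss
stays controlled, and this keeps the iterates in the ball of radius `4 g0` on which the margins
are regular. -/
lemma gd_potential (hK : 1 ≤ K) (hκ : 0 ≤ κ) (hη : 0 < η) (hg0 : 0 < g0)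
    (hηG : η * G ^ 2 ≤ 1 / 5) (hκg : κ * g0 ^ 2 ≤ 1 / 128) (hηg : η ≤ g0 ^ 2)
    (hF : ∀ i, Reg (F (ω i)) (g (ω i)) (Metric.closedBall θ0 (4 * g0)) G κ)
    (h0 : θ 0 = θ0) (hs : ∀ k, θ (k + 1) = θ k - η • pg F g ω univ (θ k))
    {a : E} (ha : ‖a - θ0‖ ^ 2 = 2 * g0 ^ 2) (haL : pl F ω univ a ≤ 1 / K) (k : ℕ) (hk : k ≤ K) :
    θ k ∈ Metric.closedBall θ0 (4 * g0) ∧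
      ‖θ k - a‖ ^ 2 + 8 / 5 * η * ∑ m ∈ range k, pl F ω univ (θ m) ≤
        2 * g0 ^ 2 + 2 * η * (k / K) := by
  have hK0 : (0 : ℝ) < K := by exact_mod_cast hK
  have ha32 : ‖a - θ0‖ ≤ 3 / 2 * g0 := by
    refine le_of_sq_le_sq ?_ (by positivity)
    rw [ha]; nlinarith
  have haS : a ∈ Metric.closedBall θ0 (4 * g0) := by
    rw [mem_closedBall_iff_norm]; linarith
  -- the potential bound forces `‖θ k - a‖ ≤ 2 g0`
  have hD : ∀ k : ℕ, k ≤ K → ‖θ k - a‖ ^ 2 + 8 / 5 * η * ∑ m ∈ range k, pl F ω univ (θ m) ≤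
        2 * g0 ^ 2 + 2 * η * (k / K) → ‖θ k - a‖ ^ 2 ≤ 4 * g0 ^ 2 := by
    intro k hk h
    have h1 : (k : ℝ) / K ≤ 1 := by
      rw [div_le_one hK0]; exact_mod_cast hk
    have h2 : 0 ≤ 8 / 5 * η * ∑ m ∈ range k, pl F ω univ (θ m) :=
      mul_nonneg (by positivity) (sum_nonneg fun _ _ => pl_nonneg _ _ _ _)
    nlinarith
  have hS : ∀ k : ℕ, ‖θ k - a‖ ^ 2 ≤ 4 * g0 ^ 2 → θ k ∈ Metric.closedBall θ0 (4 * g0) := by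
    intro k h
    have h1 : ‖θ k - a‖ ≤ 2 * g0 := by
      refine le_of_sq_le_sq ?_ (by positivity)
      nlinarith
    rw [mem_closedBall_iff_norm]
    have : ‖θ k - θ0‖ ≤ ‖θ k - a‖ + ‖a - θ0‖ := by
      simpa using norm_add_le (θ k - a) (a - θ0)
    linarith
  induction k with
  | zero =>
    refine ⟨by rw [h0]; simp [hg0.le], ?_⟩
    simp [h0, norm_sub_rev θ0 a, ha]
  | succ k ih =>
    obtain ⟨hkS, hpot⟩ := ih (by omega)
    have hDk := hD k (by omega) hpot
    have hstep : ‖θ (k + 1) - a‖ ^ 2 + 8 / 5 * η * ∑ m ∈ range (k + 1), pl F ω univ (θ m) ≤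
        2 * g0 ^ 2 + 2 * η * ((k + 1 : ℕ) / K) := by
      have hw := weak_convex (s := univ) hκ hF hkS haS
      have hg := pg_norm_sq (s := univ) hF hkS
      have hp := pl_nonneg F ω univ (θ k)
      have e1 : θ (k + 1) - a = (θ k - a) - η • pg F g ω univ (θ k) := by rw [hs]; abel
      have e2 : ⟪pg F g ω univ (θ k), a - θ k⟫ = -⟪θ k - a, pg F g ω univ (θ k)⟫ := by
        rw [real_inner_comm, ← inner_neg_left, neg_sub]
      rw [e1, norm_sub_sq_real, norm_smul, Real.norm_of_nonneg hη.le, real_inner_smul_right,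
        mul_pow, sum_range_succ]
      rw [e2, norm_sub_rev a] at hw
      have h3 : η ^ 2 * ‖pg F g ω univ (θ k)‖ ^ 2 ≤ 1 / 5 * (η * pl F ω univ (θ k)) := by
        calc _ ≤ η ^ 2 * (G ^ 2 * pl F ω univ (θ k)) := by gcongr
          _ = (η * G ^ 2) * (η * pl F ω univ (θ k)) := by ring
          _ ≤ _ := by gcongr
      have h4 : κ * pl F ω univ (θ k) * ‖θ k - a‖ ^ 2 ≤ 1 / 32 * pl F ω univ (θ k) := by
        calc _ ≤ κ * pl F ω univ (θ k) * (4 * g0 ^ 2) := by gcongr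
          _ = (κ * g0 ^ 2) * (4 * pl F ω univ (θ k)) := by ring
          _ ≤ (1 / 128) * (4 * pl F ω univ (θ k)) := by gcongr
          _ = _ := by ring
      have h5 : η * (31 / 32 * pl F ω univ (θ k) - 1 / K) ≤
          η * ⟪θ k - a, pg F g ω univ (θ k)⟫ :=
        mul_le_mul_of_nonneg_left (by linarith) hη.le
      have h6 : 2 * η * (((k + 1 : ℕ) : ℝ) / K) = 2 * η * (k / K) + 2 * (η * (1 / K)) := by
        push_cast; ring
      have h7 : 0 ≤ η * pl F ω univ (θ k) := by positivity
      rw [h6]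
      nlinarith
    exact ⟨hS _ (hD _ hk hstep), hstep⟩

/-- Outcome of the training analysis: the iterates stay in the ball, the accumulated loss is
controlled, and the last iterate is at least as good as the average one. -/
lemma gd_train (hK : 1 ≤ K) (hκ : 0 ≤ κ) (hη : 0 < η) (hg0 : 0 < g0)
    (hηG : η * G ^ 2 ≤ 1 / 5) (hηκ : η * κ ≤ 1 / 2) (hκg : κ * g0 ^ 2 ≤ 1 / 128)
    (hηg : η ≤ g0 ^ 2)
    (hF : ∀ i, Reg (F (ω i)) (g (ω i)) (Metric.closedBall θ0 (4 * g0)) G κ)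
    (h0 : θ 0 = θ0) (hs : ∀ k, θ (k + 1) = θ k - η • pg F g ω univ (θ k))
    {a : E} (ha : ‖a - θ0‖ ^ 2 = 2 * g0 ^ 2) (haL : pl F ω univ a ≤ 1 / K) :
    (∀ k ≤ K, θ k ∈ Metric.closedBall θ0 (4 * g0)) ∧
    η * ∑ m ∈ range K, pl F ω univ (θ m) ≤ 5 / 4 * (η + g0 ^ 2) ∧
    K * pl F ω univ (θ K) ≤ ∑ m ∈ range K, pl F ω univ (θ m) := by
  have hpot := gd_potential hK hκ hη hg0 hηG hκg hηg hF h0 hs ha haL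
  have hK0 : (0 : ℝ) < K := by exact_mod_cast hK
  refine ⟨fun k hk => (hpot k hk).1, ?_, ?_⟩
  · have h := (hpot K le_rfl).2
    rw [div_self hK0.ne'] at h
    nlinarith [sq_nonneg ‖θ K - a‖]
  · have hdesc : ∀ k, k < K → pl F ω univ (θ (k + 1)) ≤ pl F ω univ (θ k) := by
      intro k hk
      have h := smooth_upper (s := univ) hκ hF (hpot k hk.le).1 (hpot (k + 1) hk).1
      have e : θ (k + 1) - θ k = -(η • pg F g ω univ (θ k)) := by rw [hs]; abel
      rw [e, inner_neg_right, norm_neg, real_inner_smul_right, norm_smul,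
        Real.norm_of_nonneg hη.le, real_inner_self_eq_norm_sq, mul_pow] at h
      have h2 : (η * (κ + G ^ 2 / 4)) * (η * ‖pg F g ω univ (θ k)‖ ^ 2) ≤
          1 * (η * ‖pg F g ω univ (θ k)‖ ^ 2) := by
        gcongr
        linarith
      nlinarith
    have hle : ∀ j, ∀ m, m + j = K → pl F ω univ (θ K) ≤ pl F ω univ (θ m) := by
      intro j
      induction j with
      | zero => intro m hm; rw [← hm]; simp
      | succ j ih => intro m hm; exact (ih (m + 1) (by omega)).trans (hdesc m (by omega))
    calc (K : ℝ) * pl F ω univ (θ K) = ∑ m ∈ range K, pl F ω univ (θ K) := by simp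
      _ ≤ _ := sum_le_sum fun m hm => hle (K - m) m (by
        have := mem_range.1 hm; omega)

lemma pg_split (ω : Fin n → Z) (i : Fin n) (θ : E) :
    pg F g ω univ θ = pg F g ω (univ.erase i) θ -
      (1 / (n : ℝ)) • (wt (F (ω i) θ) • g (ω i) θ) := by
  unfold pg
  rw [← add_sum_erase univ _ (mem_univ i), smul_add]
  abel

/-- Replace-one stability of gradient descent. -/
lemma gd_stability (hκ : 0 ≤ κ) (hG : 0 ≤ G) (hη : 0 < η)
    (hηG : η * G ^ 2 ≤ 1 / 5) (hηκ : η * κ ≤ 1 / 2) (hκg : κ * g0 ^ 2 ≤ 1 / 128)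
    {ω' : Fin n → Z} {i : Fin n} (hω : ∀ j, j ≠ i → ω' j = ω j) {S : Set E}
    (hF : ∀ j, Reg (F (ω j)) (g (ω j)) S G κ)
    (hF' : ∀ j, Reg (F (ω' j)) (g (ω' j)) S G κ)
    {θ' : ℕ → E} (h0 : θ 0 = θ' 0)
    (hs : ∀ k, θ (k + 1) = θ k - η • pg F g ω univ (θ k))
    (hs' : ∀ k, θ' (k + 1) = θ' k - η • pg F g ω' univ (θ' k))
    (hS : ∀ k ≤ K, θ k ∈ S) (hS' : ∀ k ≤ K, θ' k ∈ S)
    (hsum : η * ∑ m ∈ range K, pl F ω univ (θ m) ≤ 5 / 2 * g0 ^ 2)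
    (hsum' : η * ∑ m ∈ range K, pl F ω' univ (θ' m) ≤ 5 / 2 * g0 ^ 2) :
    ‖θ K - θ' K‖ ≤ 2 * (η * G / n) *
      ∑ m ∈ range K, (lg (F (ω i) (θ m)) + lg (F (ω' i) (θ' m))) := by
  set P : ℕ → ℝ := fun m => pl F ω univ (θ m) + pl F ω' univ (θ' m) with hP
  have hP0 : ∀ m, 0 ≤ P m := fun m => add_nonneg (pl_nonneg _ _ _ _) (pl_nonneg _ _ _ _)
  set ℓ : ℕ → ℝ := fun m => lg (F (ω i) (θ m)) + lg (F (ω' i) (θ' m)) with hℓ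
  have hℓ0 : ∀ m, 0 ≤ ℓ m := fun m => add_nonneg (lg_pos _).le (lg_pos _).le
  have herase : ∀ x, pg F g ω' (univ.erase i) x = pg F g ω (univ.erase i) x := by
    intro x
    unfold pg
    congr 2
    refine sum_congr rfl fun j hj => ?_
    rw [hω j (ne_of_mem_erase hj)]
  have herase' : ∀ x, pl F ω' (univ.erase i) x = pl F ω (univ.erase i) x := by
    intro x
    unfold pl
    congr 1
    refine sum_congr rfl fun j hj => ?_
    rw [hω j (ne_of_mem_erase hj)]
  have hind : ∀ k, k ≤ K → ‖θ k - θ' k‖ ≤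
      Real.exp (2 * (η * κ * ∑ m ∈ range k, P m)) * ((η * G / n) * ∑ m ∈ range k, ℓ m) := by
    intro k
    induction k with
    | zero => intro _; simp [h0]
    | succ k ih =>
      intro hk
      have ih := ih (by omega)
      have hu := hS k (by omega)
      have hv := hS' k (by omega)
      have e : θ (k + 1) - θ' (k + 1) =
          (θ k - θ' k - η • (pg F g ω (univ.erase i) (θ k) - pg F g ω (univ.erase i) (θ' k)))
          + (η * (1 / (n : ℝ))) • (wt (F (ω i) (θ k)) • g (ω i) (θ k)
            - wt (F (ω' i) (θ' k)) • g (ω' i) (θ' k)) := by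
        rw [hs, hs', pg_split ω i, pg_split ω' i, herase]
        simp only [smul_sub, mul_smul]
        abel
      have h1 := expand (s := univ.erase i) hκ hη.le (by linarith) (by linarith) hF hu hv
      have h2 : ‖wt (F (ω i) (θ k)) • g (ω i) (θ k)
            - wt (F (ω' i) (θ' k)) • g (ω' i) (θ' k)‖ ≤ G * ℓ k := by
        refine (norm_sub_le _ _).trans ?_
        rw [norm_smul, norm_smul, Real.norm_of_nonneg (wt_pos _).le,
          Real.norm_of_nonneg (wt_pos _).le]
        have a1 : wt (F (ω i) (θ k)) * ‖g (ω i) (θ k)‖ ≤ lg (F (ω i) (θ k)) * G := by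
          gcongr
          · exact (lg_pos _).le
          · exact wt_le_lg _
          · exact (hF i).grad _ hu
        have a2 : wt (F (ω' i) (θ' k)) * ‖g (ω' i) (θ' k)‖ ≤ lg (F (ω' i) (θ' k)) * G := by
          gcongr
          · exact (lg_pos _).le
          · exact wt_le_lg _
          · exact (hF' i).grad _ hv
        simp only [hℓ]
        linarith
      have h3 : pl F ω (univ.erase i) (θ k) + pl F ω (univ.erase i) (θ' k) ≤ P k := by
        have b1 := pl_mono F ω (erase_subset i univ) (θ k)
        have b2 := pl_mono F ω' (erase_subset i univ) (θ' k)
        rw [herase'] at b2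
        simp only [hP]; linarith
      have h4 : ‖θ (k + 1) - θ' (k + 1)‖ ≤
          Real.exp (2 * (η * κ * P k)) * ‖θ k - θ' k‖ + (η * G / n) * ℓ k := by
        rw [e]
        refine (norm_add_le _ _).trans (add_le_add (h1.trans ?_) ?_)
        · gcongr
        · rw [norm_smul, Real.norm_of_nonneg (by positivity)]
          calc _ ≤ η * (1 / (n : ℝ)) * (G * ℓ k) := by gcongr
            _ = _ := by ring
      have hc : 0 ≤ (η * G / n) * ℓ k := mul_nonneg (by positivity) (hℓ0 k)
      have h5 : 1 ≤ Real.exp (2 * (η * κ * ∑ m ∈ range (k + 1), P m)) := by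
        rw [Real.one_le_exp_iff]
        have := sum_nonneg fun m (_ : m ∈ range (k + 1)) => hP0 m
        positivity
      calc _ ≤ _ := h4
        _ ≤ Real.exp (2 * (η * κ * P k)) * (Real.exp (2 * (η * κ * ∑ m ∈ range k, P m)) *
              ((η * G / n) * ∑ m ∈ range k, ℓ m)) +
            Real.exp (2 * (η * κ * ∑ m ∈ range (k + 1), P m)) * ((η * G / n) * ℓ k) :=
          add_le_add (by gcongr) (le_mul_of_one_le_left hc h5)
        _ = _ := by
          rw [sum_range_succ, sum_range_succ, ← mul_assoc, ← Real.exp_add]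
          rw [show 2 * (η * κ * P k) + 2 * (η * κ * ∑ m ∈ range k, P m) =
            2 * (η * κ * (∑ m ∈ range k, P m + P k)) by ring]
          ring
  have hfin := hind K le_rfl
  have hexp : Real.exp (2 * (η * κ * ∑ m ∈ range K, P m)) ≤ 2 := by
    have h1 : η * ∑ m ∈ range K, P m ≤ 5 * g0 ^ 2 := by
      simp only [hP, sum_add_distrib]; linarith
    have h2 : 2 * (η * κ * ∑ m ∈ range K, P m) ≤ 1 / 2 := by
      have := mul_le_mul_of_nonneg_left h1 hκ
      nlinarith
    have h3 : Real.exp (1 / 2) ≤ 2 := by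
      rw [← Real.le_log_iff_exp_le (by norm_num)]
      linarith [Real.log_two_gt_d9]
    exact (Real.exp_le_exp.2 h2).trans h3
  refine hfin.trans ?_
  have hc : 0 ≤ (η * G / n) * ∑ m ∈ range K, ℓ m :=
    mul_nonneg (by positivity) (sum_nonneg fun m _ => hℓ0 m)
  rw [mul_assoc 2]
  exact mul_le_mul_of_nonneg_right hexp hc

end GD

end MHBounds

/-! ### Derivatives of the attention model -/

namespace MHBounds

section Attention

/-- Expectation of `f` under the softmax distribution with logits `q`. -/
noncomputable def Ex {T : ℕ} (q f : Fin T → ℝ) : ℝ := ∑ s, smax q s * f s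

lemma smax_nonneg {T : ℕ} (q : Fin T → ℝ) (s : Fin T) : 0 ≤ smax q s :=
  div_nonneg (Real.exp_pos _).le (sum_nonneg fun _ _ => (Real.exp_pos _).le)

lemma smax_sum_le {T : ℕ} (q : Fin T → ℝ) : ∑ s, smax q s ≤ 1 := by
  simp only [smax, ← sum_div]
  exact div_self_le_one _

lemma Ex_abs_le {T : ℕ} (q : Fin T → ℝ) {f : Fin T → ℝ} {C : ℝ} (hC : 0 ≤ C)
    (hf : ∀ s, |f s| ≤ C) : |Ex q f| ≤ C := by
  calc |Ex q f| ≤ ∑ s, |smax q s * f s| := abs_sum_le_sum_abs _ _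
    _ ≤ ∑ s, smax q s * C := sum_le_sum fun s _ => by
        rw [abs_mul, abs_of_nonneg (smax_nonneg q s)]
        exact mul_le_mul_of_nonneg_left (hf s) (smax_nonneg q s)
    _ = (∑ s, smax q s) * C := by rw [sum_mul]
    _ ≤ 1 * C := mul_le_mul_of_nonneg_right (smax_sum_le q) hC
    _ = C := one_mul C

lemma sum_exp_pos {T : ℕ} (q : Fin T → ℝ) (s : Fin T) : 0 < ∑ r, Real.exp (q r) :=
  sum_pos (fun _ _ => Real.exp_pos _) ⟨s, mem_univ s⟩

lemma hasDerivAt_smax {T : ℕ} {q : ℝ → Fin T → ℝ} {σ : Fin T → ℝ} {τ : ℝ}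
    (hq : ∀ s, HasDerivAt (fun x => q x s) (σ s) τ) (s : Fin T) :
    HasDerivAt (fun x => smax (q x) s) (smax (q τ) s * (σ s - Ex (q τ) σ)) τ := by
  have h1 := (hq s).exp
  have h2 : HasDerivAt (fun x => ∑ r, Real.exp (q x r)) (∑ r, Real.exp (q τ r) * σ r) τ :=
    HasDerivAt.fun_sum fun r _ => (hq r).exp
  have hpos := sum_exp_pos (q τ) s
  have h := h1.div h2 hpos.ne'
  have e : smax (q τ) s * (σ s - Ex (q τ) σ) =
      (Real.exp (q τ s) * σ s * ∑ r, Real.exp (q τ r) -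
        Real.exp (q τ s) * ∑ r, Real.exp (q τ r) * σ r) / (∑ r, Real.exp (q τ r)) ^ 2 := by
    have e2 : Ex (q τ) σ = (∑ r, Real.exp (q τ r) * σ r) / ∑ r, Real.exp (q τ r) := by
      simp only [Ex, smax, sum_div]
      exact sum_congr rfl fun r _ => by ring
    rw [e2, smax]
    field_simp
  rw [e]
  exact h

/-- Product rule for softmax expectations: moving the logits in direction `σ` adds the covariance
with `σ`. -/
lemma hasDerivAt_Ex {T : ℕ} {q f : ℝ → Fin T → ℝ} {σ e : Fin T → ℝ} {τ : ℝ}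
    (hq : ∀ s, HasDerivAt (fun x => q x s) (σ s) τ)
    (hf : ∀ s, HasDerivAt (fun x => f x s) (e s) τ) :
    HasDerivAt (fun x => Ex (q x) (f x))
      (Ex (q τ) e + Ex (q τ) (fun s => f τ s * σ s) - Ex (q τ) (f τ) * Ex (q τ) σ) τ := by
  have h : HasDerivAt (fun x => ∑ s, smax (q x) s * f x s)
      (∑ s, (smax (q τ) s * (σ s - Ex (q τ) σ) * f τ s + smax (q τ) s * e s)) τ :=
    HasDerivAt.fun_sum fun s _ => (hasDerivAt_smax hq s).mul (hf s)
  have e2 : Ex (q τ) (f τ) * Ex (q τ) σ = ∑ s, smax (q τ) s * f τ s * Ex (q τ) σ := by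
    rw [← sum_mul]; rfl
  have e3 : Ex (q τ) e + Ex (q τ) (fun s => f τ s * σ s) - Ex (q τ) (f τ) * Ex (q τ) σ =
      ∑ s, (smax (q τ) s * (σ s - Ex (q τ) σ) * f τ s + smax (q τ) s * e s) := by
    rw [e2]
    conv_lhs => enter [1]; simp only [Ex]
    rw [← sum_add_distrib, ← sum_sub_distrib]
    exact sum_congr rfl fun s _ => by ring
  rw [e3]
  exact h

variable {T d H : ℕ}

/-- Values `⟨U_{h,t}, x_s⟩` read out by row `t` of head `h`. -/
noncomputable def cv (X : Fin T → Fin d → ℝ) (θ : Params T d H) (h : Fin H) (t : Fin T) :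
    Fin T → ℝ := fun s => ∑ j, headU θ h t j * X s j

/-- Logits of row `t` of head `h`. -/
noncomputable def sc (X : Fin T → Fin d → ℝ) (θ : Params T d H) (h : Fin H) (t : Fin T) :
    Fin T → ℝ := attnScores X (headW θ h) t

lemma mhPhi_eq (X : Fin T → Fin d → ℝ) (θ : Params T d H) :
    mhPhi X θ = (1 / Real.sqrt H) * ∑ h, ∑ t, Ex (sc X θ h t) (cv X θ h t) := rfl

lemma cv_line (X : Fin T → Fin d → ℝ) (a v : Params T d H) (τ : ℝ) (h : Fin H) (t s : Fin T) :
    cv X (a + τ • v) h t s = cv X a h t s + τ * cv X v h t s := by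
  simp only [cv, headU, PiLp.add_apply, PiLp.smul_apply, smul_eq_mul, mul_sum,
    ← sum_add_distrib]
  exact sum_congr rfl fun j _ => by ring

lemma sc_line (X : Fin T → Fin d → ℝ) (a v : Params T d H) (τ : ℝ) (h : Fin H) (t s : Fin T) :
    sc X (a + τ • v) h t s = sc X a h t s + τ * sc X v h t s := by
  simp only [sc, attnScores, headW, PiLp.add_apply, PiLp.smul_apply, smul_eq_mul, mul_sum,
    ← sum_add_distrib]
  exact sum_congr rfl fun j _ => sum_congr rfl fun k _ => by ring

lemma hasDerivAt_cv (X : Fin T → Fin d → ℝ) (a v : Params T d H) (τ : ℝ) (h : Fin H)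
    (t s : Fin T) : HasDerivAt (fun x : ℝ => cv X (a + x • v) h t s) (cv X v h t s) τ := by
  simp only [cv_line]
  simpa using ((hasDerivAt_id τ).mul_const (cv X v h t s)).const_add (cv X a h t s)

lemma hasDerivAt_sc (X : Fin T → Fin d → ℝ) (a v : Params T d H) (τ : ℝ) (h : Fin H)
    (t s : Fin T) : HasDerivAt (fun x : ℝ => sc X (a + x • v) h t s) (sc X v h t s) τ := by
  simp only [sc_line]
  simpa using ((hasDerivAt_id τ).mul_const (sc X v h t s)).const_add (sc X a h t s)

/-- Derivative of row `t` of head `h` in direction `v`. -/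
noncomputable def dRow (X : Fin T → Fin d → ℝ) (θ v : Params T d H) (h : Fin H) (t : Fin T) : ℝ :=
  Ex (sc X θ h t) (cv X v h t) + Ex (sc X θ h t) (fun s => cv X θ h t s * sc X v h t s)
    - Ex (sc X θ h t) (cv X θ h t) * Ex (sc X θ h t) (sc X v h t)

/-- Mixed second derivative of row `t` of head `h` in directions `v` and `w`. -/
noncomputable def ddRow (X : Fin T → Fin d → ℝ) (θ v w : Params T d H) (h : Fin H) (t : Fin T) :
    ℝ :=
  let E := Ex (sc X θ h t)
  let c := cv X θ h t
  let p := sc X v h t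
  let q := sc X w h t
  (E (fun s => cv X v h t s * q s) - E (cv X v h t) * E q)
    + (E (fun s => cv X w h t s * p s) + E (fun s => c s * p s * q s)
      - E (fun s => c s * p s) * E q)
    - ((E (cv X w h t) + E (fun s => c s * q s) - E c * E q) * E p
      + E c * (E (fun s => p s * q s) - E p * E q))

/-- Derivative of the multi-head model in direction `v`. -/
noncomputable def dPhi (X : Fin T → Fin d → ℝ) (θ v : Params T d H) : ℝ :=
  (1 / Real.sqrt H) * ∑ h, ∑ t, dRow X θ v h t

lemma hasDerivAt_mhPhi (X : Fin T → Fin d → ℝ) (a v : Params T d H) (τ : ℝ) :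
    HasDerivAt (fun x : ℝ => mhPhi X (a + x • v)) (dPhi X (a + τ • v) v) τ := by
  simp only [mhPhi_eq, dPhi]
  refine HasDerivAt.const_mul _ (HasDerivAt.fun_sum fun h _ => HasDerivAt.fun_sum fun t _ => ?_)
  exact hasDerivAt_Ex (fun s => hasDerivAt_sc X a v τ h t s)
    (fun s => hasDerivAt_cv X a v τ h t s)

lemma Ex_zero (q : Fin T → ℝ) : Ex q 0 = 0 := by simp [Ex]

lemma hasDerivAt_dPhi (X : Fin T → Fin d → ℝ) (a v w : Params T d H) (τ : ℝ) :
    HasDerivAt (fun x : ℝ => dPhi X (a + x • w) v)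
      ((1 / Real.sqrt H) * ∑ h, ∑ t, ddRow X (a + τ • w) v w h t) τ := by
  simp only [dPhi]
  refine HasDerivAt.const_mul _ (HasDerivAt.fun_sum fun h _ => HasDerivAt.fun_sum fun t _ => ?_)
  have hq := fun s => hasDerivAt_sc X a w τ h t s
  have hc := fun s => hasDerivAt_cv X a w τ h t s
  have h1 := hasDerivAt_Ex (f := fun _ => cv X v h t) (e := 0) hq
    (fun s => hasDerivAt_const τ (cv X v h t s))
  have h2 := hasDerivAt_Ex (f := fun x s => cv X (a + x • w) h t s * sc X v h t s)
    (e := fun s => cv X w h t s * sc X v h t s) hq (fun s => (hc s).mul_const _)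
  have h3 := hasDerivAt_Ex hq hc
  have h4 := hasDerivAt_Ex (f := fun _ => sc X v h t) (e := 0) hq
    (fun s => hasDerivAt_const τ (sc X v h t s))
  rw [Ex_zero, zero_add] at h1 h4
  exact (h1.add h2).sub (h3.mul h4)

/-! ### Norms of the blocks of a parameter vector -/

/-- Euclidean norm of row `t` of `U_h`. -/
noncomputable def uN (θ : Params T d H) (h : Fin H) (t : Fin T) : ℝ :=
  Real.sqrt (∑ j, headU θ h t j ^ 2)

/-- Frobenius norm of `U_h`. -/
noncomputable def uuN (θ : Params T d H) (h : Fin H) : ℝ :=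
  Real.sqrt (∑ t, ∑ j, headU θ h t j ^ 2)

/-- Frobenius norm of `W_h`. -/
noncomputable def wN (θ : Params T d H) (h : Fin H) : ℝ :=
  Real.sqrt (∑ j, ∑ k, headW θ h j k ^ 2)

/-- Euclidean norm of the parameters of head `h`. -/
noncomputable def hN (θ : Params T d H) (h : Fin H) : ℝ :=
  Real.sqrt (∑ p : HeadIx T d, θ (h, p) ^ 2)

lemma hN_sq (θ : Params T d H) (h : Fin H) : hN θ h ^ 2 = uuN θ h ^ 2 + wN θ h ^ 2 := by
  unfold hN uuN wN
  rw [Real.sq_sqrt (by positivity), Real.sq_sqrt (by positivity), Real.sq_sqrt (by positivity),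
    Fintype.sum_sum_type, Fintype.sum_prod_type, Fintype.sum_prod_type]
  rfl

lemma uN_nonneg (θ : Params T d H) (h : Fin H) (t : Fin T) : 0 ≤ uN θ h t := Real.sqrt_nonneg _
lemma uuN_nonneg (θ : Params T d H) (h : Fin H) : 0 ≤ uuN θ h := Real.sqrt_nonneg _
lemma wN_nonneg (θ : Params T d H) (h : Fin H) : 0 ≤ wN θ h := Real.sqrt_nonneg _
lemma hN_nonneg (θ : Params T d H) (h : Fin H) : 0 ≤ hN θ h := Real.sqrt_nonneg _

lemma uuN_le (θ : Params T d H) (h : Fin H) : uuN θ h ≤ hN θ h := by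
  refine le_of_sq_le_sq ?_ (hN_nonneg θ h)
  rw [hN_sq]; nlinarith [sq_nonneg (wN θ h)]

lemma wN_le (θ : Params T d H) (h : Fin H) : wN θ h ≤ hN θ h := by
  refine le_of_sq_le_sq ?_ (hN_nonneg θ h)
  rw [hN_sq]; nlinarith [sq_nonneg (uuN θ h)]

lemma cross_le (v w : Params T d H) (h : Fin H) :
    uuN v h * wN w h + uuN w h * wN v h ≤ hN v h * hN w h := by
  refine le_of_sq_le_sq ?_ (mul_nonneg (hN_nonneg _ _) (hN_nonneg _ _))
  rw [mul_pow, hN_sq, hN_sq]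
  nlinarith [sq_nonneg (uuN v h * uuN w h - wN v h * wN w h)]

lemma sum_uN_le (θ : Params T d H) (h : Fin H) : ∑ t, uN θ h t ≤ Real.sqrt T * uuN θ h := by
  refine le_of_sq_le_sq ?_ (mul_nonneg (Real.sqrt_nonneg _) (uuN_nonneg _ _))
  have h1 := sq_sum_le_card_mul_sum_sq (s := univ) (f := fun t => uN θ h t)
  rw [mul_pow, Real.sq_sqrt (by positivity), uuN, Real.sq_sqrt (by positivity)]
  refine h1.trans (le_of_eq ?_)
  simp only [card_univ, Fintype.card_fin]
  congr 1
  exact sum_congr rfl fun t _ => Real.sq_sqrt (by positivity)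

lemma norm_sq_eq (θ : Params T d H) : ‖θ‖ ^ 2 = ∑ h, hN θ h ^ 2 := by
  rw [EuclideanSpace.norm_sq_eq, Fintype.sum_prod_type]
  refine sum_congr rfl fun h _ => ?_
  rw [hN, Real.sq_sqrt (by positivity)]
  simp

lemma hN_le_norm (θ : Params T d H) (h : Fin H) : hN θ h ≤ ‖θ‖ := by
  refine le_of_sq_le_sq ?_ (norm_nonneg _)
  rw [norm_sq_eq]
  exact single_le_sum (f := fun h => hN θ h ^ 2) (fun _ _ => sq_nonneg _) (mem_univ h)

lemma hN_eq_norm (θ : Params T d H) (h : Fin H) :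
    hN θ h = ‖(WithLp.toLp 2 fun p => θ (h, p) : EuclideanSpace ℝ (HeadIx T d))‖ := by
  rw [EuclideanSpace.norm_eq, hN]
  simp

lemma hN_add_le (a b : Params T d H) (h : Fin H) : hN (a + b) h ≤ hN a h + hN b h := by
  simp only [hN_eq_norm]
  exact norm_add_le (WithLp.toLp 2 fun p => a (h, p) : EuclideanSpace ℝ (HeadIx T d))
    (WithLp.toLp 2 fun p => b (h, p))

lemma sum_hN_le (v : Params T d H) : ∑ h, hN v h ≤ Real.sqrt H * ‖v‖ := by
  refine le_of_sq_le_sq ?_ (by positivity)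
  have h1 := sq_sum_le_card_mul_sum_sq (s := univ) (f := fun h => hN v h)
  rw [mul_pow, Real.sq_sqrt (by positivity), norm_sq_eq]
  simpa using h1

lemma sum_hN_mul_le (v w : Params T d H) : ∑ h, hN v h * hN w h ≤ ‖v‖ * ‖w‖ := by
  refine le_of_sq_le_sq ?_ (by positivity)
  rw [mul_pow, norm_sq_eq, norm_sq_eq]
  exact sum_mul_sq_le_sq_mul_sq _ _ _

variable {X : Fin T → Fin d → ℝ} {R M : ℝ}

lemma cv_le (hX : ∀ t, Real.sqrt (∑ j, X t j ^ 2) ≤ R) (θ : Params T d H) (h : Fin H)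
    (t s : Fin T) : |cv X θ h t s| ≤ R * uN θ h t := by
  have hR : 0 ≤ R := (Real.sqrt_nonneg _).trans (hX s)
  have h1 : |cv X θ h t s| ≤ uN θ h t * Real.sqrt (∑ j, X s j ^ 2) := by
    refine abs_le_of_sq_le_sq ?_ (mul_nonneg (uN_nonneg _ _ _) (Real.sqrt_nonneg _))
    rw [mul_pow, uN, Real.sq_sqrt (by positivity), Real.sq_sqrt (by positivity)]
    exact sum_mul_sq_le_sq_mul_sq _ _ _
  calc _ ≤ _ := h1
    _ ≤ uN θ h t * R := mul_le_mul_of_nonneg_left (hX s) (uN_nonneg _ _ _)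
    _ = _ := mul_comm _ _

lemma sc_le (hX : ∀ t, Real.sqrt (∑ j, X t j ^ 2) ≤ R) (θ : Params T d H) (h : Fin H)
    (t s : Fin T) : |sc X θ h t s| ≤ R ^ 2 * wN θ h := by
  have hR : 0 ≤ R := (Real.sqrt_nonneg _).trans (hX s)
  have hx : ∀ t, ∑ j, X t j ^ 2 ≤ R ^ 2 := fun t => (Real.sqrt_le_left hR).1 (hX t)
  refine abs_le_of_sq_le_sq ?_ (mul_nonneg (by positivity) (wN_nonneg _ _))
  have e : sc X θ h t s = ∑ p : Fin d × Fin d, headW θ h p.1 p.2 * (X t p.1 * X s p.2) := by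
    rw [Fintype.sum_prod_type, sc, attnScores]
    refine sum_congr rfl fun j _ => sum_congr rfl fun k _ => ?_
    ring
  rw [e, mul_pow, wN, Real.sq_sqrt (by positivity)]
  refine (sum_mul_sq_le_sq_mul_sq _ _ _).trans ?_
  have e2 : ∑ p : Fin d × Fin d, (X t p.1 * X s p.2) ^ 2 =
      (∑ j, X t j ^ 2) * ∑ k, X s k ^ 2 := by
    rw [Fintype.sum_prod_type, sum_mul_sum]
    exact sum_congr rfl fun j _ => sum_congr rfl fun k _ => by ring
  have e3 : ∑ p : Fin d × Fin d, (X t p.1 * X s p.2) ^ 2 ≤ R ^ 2 * R ^ 2 := by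
    rw [e2]
    exact mul_le_mul (hx t) (hx s) (by positivity) (by positivity)
  rw [Fintype.sum_prod_type (f := fun p : Fin d × Fin d => headW θ h p.1 p.2 ^ 2)]
  calc _ ≤ (∑ j, ∑ k, headW θ h j k ^ 2) * (R ^ 2 * R ^ 2) := by gcongr
    _ = _ := by ring

lemma abs_mul_le {a b A B : ℝ} (ha : |a| ≤ A) (hb : |b| ≤ B) : |a * b| ≤ A * B := by
  rw [abs_mul]
  exact mul_le_mul ha hb (abs_nonneg _) ((abs_nonneg _).trans ha)

lemma dRow_le (hX : ∀ t, Real.sqrt (∑ j, X t j ^ 2) ≤ R) (hR : 0 ≤ R) (θ v : Params T d H)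
    (h : Fin H) (t : Fin T) :
    |dRow X θ v h t| ≤ R * uN v h t + 2 * R ^ 3 * (uN θ h t * wN v h) := by
  have hu := uN_nonneg θ h t
  have hv := uN_nonneg v h t
  have hw := wN_nonneg v h
  have a1 := Ex_abs_le (sc X θ h t) (by positivity) (cv_le hX v h t)
  have a2 := Ex_abs_le (sc X θ h t) (f := fun s => cv X θ h t s * sc X v h t s) (by positivity)
    (fun s => abs_mul_le (cv_le hX θ h t s) (sc_le hX v h t s))
  have a3 := abs_mul_le (Ex_abs_le (sc X θ h t) (by positivity) (cv_le hX θ h t))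
    (Ex_abs_le (sc X θ h t) (by positivity) (sc_le hX v h t))
  unfold dRow
  rw [abs_le] at *
  constructor <;> nlinarith

/-- The third-order softmax cumulant is bounded term by term, which produces the factor `6`. -/
lemma ddRow_le (hX : ∀ t, Real.sqrt (∑ j, X t j ^ 2) ≤ R) (hR : 0 ≤ R) (θ v w : Params T d H)
    (h : Fin H) (t : Fin T) :
    |ddRow X θ v w h t| ≤ 2 * R ^ 3 * (uN v h t * wN w h + uN w h t * wN v h)
      + 6 * R ^ 5 * (uN θ h t * wN v h * wN w h) := by
  have hu := uN_nonneg θ h t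
  have huv := uN_nonneg v h t
  have huw := uN_nonneg w h t
  have hv := wN_nonneg v h
  have hw := wN_nonneg w h
  have E1 : ∀ {f : Fin T → ℝ} {C : ℝ}, 0 ≤ C → (∀ s, |f s| ≤ C) → |Ex (sc X θ h t) f| ≤ C :=
    fun hC hf => Ex_abs_le _ hC hf
  have c := cv_le hX θ h t
  have cv' := cv_le hX v h t
  have cw := cv_le hX w h t
  have p := sc_le hX v h t
  have q := sc_le hX w h t
  have ec := E1 (by positivity) c
  have ecv := E1 (by positivity) cv'
  have ecw := E1 (by positivity) cw
  have ep := E1 (by positivity) p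
  have eq := E1 (by positivity) q
  have t1 := E1 (by positivity) (fun s => abs_mul_le (cv' s) (q s))
  have t2 := abs_mul_le ecv eq
  have t3 := E1 (by positivity) (fun s => abs_mul_le (cw s) (p s))
  have t4 := E1 (by positivity) (fun s => abs_mul_le (abs_mul_le (c s) (p s)) (q s))
  have t5 := abs_mul_le (E1 (by positivity) (fun s => abs_mul_le (c s) (p s))) eq
  have t6 := abs_mul_le ecw ep
  have t7 := abs_mul_le (E1 (by positivity) (fun s => abs_mul_le (c s) (q s))) ep
  have t8 := abs_mul_le (abs_mul_le ec eq) ep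
  have t9 := abs_mul_le ec (E1 (by positivity) (fun s => abs_mul_le (p s) (q s)))
  have t10 := abs_mul_le ec (abs_mul_le ep eq)
  simp only [ddRow]
  rw [abs_le] at t1 t2 t3 t4 t5 t6 t7 t8 t9 t10 ⊢
  constructor <;> linarith

lemma dPhi_le (hX : ∀ t, Real.sqrt (∑ j, X t j ^ 2) ≤ R) (hR : 0 ≤ R) (hM : 0 ≤ M)
    (θ v : Params T d H) (hθ : ∀ h, hN θ h ≤ M) :
    |dPhi X θ v| ≤ Real.sqrt T * R * (2 * R ^ 2 * M + 1) * ‖v‖ := by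
  set B := Real.sqrt T * R * (2 * R ^ 2 * M + 1) with hB
  have hB0 : 0 ≤ B := by positivity
  have h1 : ∀ h, |∑ t, dRow X θ v h t| ≤ B * hN v h := by
    intro h
    have hw := wN_nonneg v h
    calc _ ≤ ∑ t, |dRow X θ v h t| := abs_sum_le_sum_abs _ _
      _ ≤ ∑ t, (R * uN v h t + 2 * R ^ 3 * (uN θ h t * wN v h)) :=
        sum_le_sum fun t _ => dRow_le hX hR θ v h t
      _ = R * (∑ t, uN v h t) + 2 * R ^ 3 * wN v h * ∑ t, uN θ h t := by
        rw [sum_add_distrib, mul_sum, mul_sum]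
        congr 1
        exact sum_congr rfl fun t _ => by ring
      _ ≤ R * (Real.sqrt T * hN v h) + 2 * R ^ 3 * hN v h * (Real.sqrt T * M) := by
        have a1 := sum_uN_le v h
        have a2 := sum_uN_le θ h
        have a3 := uuN_le v h
        have a4 := (uuN_le θ h).trans (hθ h)
        have a5 := wN_le v h
        have a6 := hN_nonneg v h
        have a7 : ∑ t, uN v h t ≤ Real.sqrt T * hN v h := a1.trans (by gcongr)
        have a8 : ∑ t, uN θ h t ≤ Real.sqrt T * M := a2.trans (by gcongr)
        have a9 : 0 ≤ ∑ t, uN θ h t := sum_nonneg fun t _ => uN_nonneg _ _ _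
        gcongr
      _ = _ := by rw [hB]; ring
  have h2 : |∑ h, ∑ t, dRow X θ v h t| ≤ B * (Real.sqrt H * ‖v‖) := by
    calc _ ≤ ∑ h, |∑ t, dRow X θ v h t| := abs_sum_le_sum_abs _ _
      _ ≤ ∑ h, B * hN v h := sum_le_sum fun h _ => h1 h
      _ ≤ _ := by rw [← mul_sum]; exact mul_le_mul_of_nonneg_left (sum_hN_le v) hB0
  rw [dPhi, abs_mul, abs_of_nonneg (by positivity)]
  rcases Nat.eq_zero_or_pos H with hH | hH
  · subst hH; simp; positivity
  · have : 0 < Real.sqrt H := Real.sqrt_pos.2 (by exact_mod_cast hH)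
    rw [one_div, inv_mul_le_iff₀ this]
    linarith

lemma ddPhi_le (hX : ∀ t, Real.sqrt (∑ j, X t j ^ 2) ≤ R) (hR : 0 ≤ R) (hM : 0 ≤ M)
    (θ v w : Params T d H) (hθ : ∀ h, hN θ h ≤ M) :
    |(1 / Real.sqrt H) * ∑ h, ∑ t, ddRow X θ v w h t| ≤
      2 * Real.sqrt T * R ^ 3 * (3 * R ^ 2 * M + 1) / Real.sqrt H * (‖v‖ * ‖w‖) := by
  set B := 2 * Real.sqrt T * R ^ 3 * (3 * R ^ 2 * M + 1) with hB
  have hB0 : 0 ≤ B := by positivity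
  have h1 : ∀ h, |∑ t, ddRow X θ v w h t| ≤ B * (hN v h * hN w h) := by
    intro h
    have hwv := wN_nonneg v h
    have hww := wN_nonneg w h
    have huv := uuN_nonneg v h
    have huw := uuN_nonneg w h
    calc _ ≤ ∑ t, |ddRow X θ v w h t| := abs_sum_le_sum_abs _ _
      _ ≤ ∑ t, (2 * R ^ 3 * (uN v h t * wN w h + uN w h t * wN v h)
            + 6 * R ^ 5 * (uN θ h t * wN v h * wN w h)) :=
        sum_le_sum fun t _ => ddRow_le hX hR θ v w h t
      _ = 2 * R ^ 3 * ((∑ t, uN v h t) * wN w h + (∑ t, uN w h t) * wN v h)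
            + 6 * R ^ 5 * ((∑ t, uN θ h t) * (wN v h * wN w h)) := by
        simp only [sum_mul, mul_add, mul_sum, ← sum_add_distrib]
        exact sum_congr rfl fun t _ => by ring
      _ ≤ 2 * R ^ 3 * ((Real.sqrt T * uuN v h) * wN w h + (Real.sqrt T * uuN w h) * wN v h)
            + 6 * R ^ 5 * ((Real.sqrt T * M) * (hN v h * hN w h)) := by
        have a4 := (uuN_le θ h).trans (hθ h)
        have a8 : ∑ t, uN θ h t ≤ Real.sqrt T * M := (sum_uN_le θ h).trans (by gcongr)
        have a9 := hN_nonneg v h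
        have a10 := sum_uN_le v h
        have a11 := sum_uN_le w h
        have a12 := wN_le v h
        have a13 := wN_le w h
        gcongr
      _ = 2 * R ^ 3 * Real.sqrt T * (uuN v h * wN w h + uuN w h * wN v h)
            + 6 * R ^ 5 * ((Real.sqrt T * M) * (hN v h * hN w h)) := by ring
      _ ≤ 2 * R ^ 3 * Real.sqrt T * (hN v h * hN w h)
            + 6 * R ^ 5 * ((Real.sqrt T * M) * (hN v h * hN w h)) := by
        have := cross_le v w h
        gcongr
      _ = _ := by rw [hB]; ring
  have h2 : |∑ h, ∑ t, ddRow X θ v w h t| ≤ B * (‖v‖ * ‖w‖) := by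
    calc _ ≤ ∑ h, |∑ t, ddRow X θ v w h t| := abs_sum_le_sum_abs _ _
      _ ≤ ∑ h, B * (hN v h * hN w h) := sum_le_sum fun h _ => h1 h
      _ ≤ _ := by rw [← mul_sum]; exact mul_le_mul_of_nonneg_left (sum_hN_mul_le v w) hB0
  rw [abs_mul, abs_of_nonneg (by positivity)]
  calc _ ≤ 1 / Real.sqrt H * (B * (‖v‖ * ‖w‖)) := by gcongr
    _ = _ := by ring

end Attention

end MHBounds

/-! ### Regularity of the margins -/

namespace MHBounds

section Regularity

variable {T d H : ℕ}

/-- Margin of the model on the sample `z = (X, y)`. -/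
noncomputable def mar (z : (Fin T → Fin d → ℝ) × ℝ) (θ : Params T d H) : ℝ := z.2 * mhPhi z.1 θ

/-- Gradient of the margin. -/
noncomputable def mgr (z : (Fin T → Fin d → ℝ) × ℝ) (θ : Params T d H) : Params T d H :=
  z.2 • gradient (fun θ => mhPhi z.1 θ) θ

lemma continuous_mhPhi :
    Continuous fun p : (Fin T → Fin d → ℝ) × Params T d H => mhPhi p.1 p.2 := by
  have hsc : ∀ h t s, Continuous fun p : (Fin T → Fin d → ℝ) × Params T d H =>
      sc p.1 p.2 h t s := by
    intro h t s
    simp only [sc, attnScores, headW]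
    fun_prop
  have hcv : ∀ h t s, Continuous fun p : (Fin T → Fin d → ℝ) × Params T d H =>
      cv p.1 p.2 h t s := by
    intro h t s
    simp only [cv, headU]
    fun_prop
  simp only [mhPhi_eq, Ex, smax]
  refine continuous_const.mul (continuous_finsetSum _ fun h _ => continuous_finsetSum _ fun t _ =>
    continuous_finsetSum _ fun s _ => Continuous.mul (Continuous.div ?_ ?_ ?_) (hcv h t s))
  · exact Real.continuous_exp.comp (hsc h t s)
  · exact continuous_finsetSum _ fun r _ => Real.continuous_exp.comp (hsc h t r)
  · exact fun p => (sum_exp_pos _ s).ne'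

lemma differentiable_mhPhi (X : Fin T → Fin d → ℝ) :
    Differentiable ℝ fun θ : Params T d H => mhPhi X θ := by
  have hsc : ∀ h t s, Differentiable ℝ fun θ : Params T d H => sc X θ h t s := by
    intro h t s
    simp only [sc, attnScores, headW]
    fun_prop
  have hcv : ∀ h t s, Differentiable ℝ fun θ : Params T d H => cv X θ h t s := by
    intro h t s
    simp only [cv, headU]
    fun_prop
  simp only [mhPhi_eq, Ex, smax, div_eq_mul_inv]
  refine Differentiable.const_mul (Differentiable.fun_sum fun h _ => Differentiable.fun_sum
    fun t _ => Differentiable.fun_sum fun s _ => Differentiable.fun_mul (Differentiable.fun_mul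
      (hsc h t s).exp (Differentiable.inv (Differentiable.fun_sum fun r _ => (hsc h t r).exp)
        fun p => (sum_exp_pos _ s).ne')) (hcv h t s)) _

lemma inner_gradient_of_line {E : Type*} [NormedAddCommGroup E] [InnerProductSpace ℝ E]
    [CompleteSpace E] {f : E → ℝ} {θ v : E} {c : ℝ} (hf : DifferentiableAt ℝ f θ)
    (h : HasDerivAt (fun x : ℝ => f (θ + x • v)) c 0) : ⟪gradient f θ, v⟫ = c := by
  rw [gradient, InnerProductSpace.toDual_symm_apply]
  exact (hf.hasFDerivAt.hasLineDerivAt v).unique h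

lemma inner_gradient_mhPhi (X : Fin T → Fin d → ℝ) (θ v : Params T d H) :
    ⟪gradient (fun θ => mhPhi X θ) θ, v⟫ = dPhi X θ v := by
  refine inner_gradient_of_line (differentiable_mhPhi X θ) ?_
  have := hasDerivAt_mhPhi X θ v 0
  simpa using this

lemma inner_mgr (z : (Fin T → Fin d → ℝ) × ℝ) (θ v : Params T d H) :
    ⟪mgr z θ, v⟫ = z.2 * dPhi z.1 θ v := by
  rw [mgr, real_inner_smul_left, inner_gradient_mhPhi]

lemma empLoss_eq {n : ℕ} (ω : Fin n → (Fin T → Fin d → ℝ) × ℝ) (θ : Params T d H) :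
    empLoss (fun i => (ω i).1) (fun i => (ω i).2) θ = pl mar ω univ θ := rfl

lemma gradient_empLoss {n : ℕ} (ω : Fin n → (Fin T → Fin d → ℝ) × ℝ) (θ : Params T d H) :
    gradient (empLoss (fun i => (ω i).1) (fun i => (ω i).2)) θ = pg mar mgr ω univ θ := by
  refine ext_inner_right ℝ fun v => ?_
  rw [inner_pg]
  refine inner_gradient_of_line ?_ ?_
  · have : ∀ i, DifferentiableAt ℝ (fun θ : Params T d H => lg (mar (ω i) θ)) θ := by
      intro i
      have h1 : DifferentiableAt ℝ (fun θ : Params T d H => mar (ω i) θ) θ :=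
        ((differentiable_mhPhi (ω i).1) θ).const_mul (ω i).2
      exact (hasDerivAt_lg _).differentiableAt.comp θ h1
    exact (DifferentiableAt.fun_sum fun i _ => this i).const_mul _
  · have h1 : ∀ i, HasDerivAt (fun x : ℝ => lg (mar (ω i) (θ + x • v)))
        (-wt (mar (ω i) θ) * ⟪mgr (ω i) θ, v⟫) 0 := by
      intro i
      have h2 : HasDerivAt (fun x : ℝ => mar (ω i) (θ + x • v)) (⟪mgr (ω i) θ, v⟫) 0 := by
        rw [inner_mgr]
        have := (hasDerivAt_mhPhi (ω i).1 θ v 0).const_mul (ω i).2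
        rw [zero_smul, add_zero] at this
        exact this
      have h3 := (hasDerivAt_lg (mar (ω i) (θ + (0 : ℝ) • v))).comp (0 : ℝ) h2
      rw [zero_smul, add_zero] at h3
      exact h3
    have h4 := (HasDerivAt.fun_sum (u := univ) fun i _ => h1 i).const_mul (1 / (n : ℝ))
    have e : -((1 / (n : ℝ)) * ∑ i, wt (mar (ω i) θ) * ⟪mgr (ω i) θ, v⟫) =
        (1 / (n : ℝ)) * ∑ i, -wt (mar (ω i) θ) * ⟪mgr (ω i) θ, v⟫ := by
      simp only [neg_mul, sum_neg_distrib, mul_neg]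
    rw [e]
    exact h4

lemma norm_le_of_inner {E : Type*} [NormedAddCommGroup E] [InnerProductSpace ℝ E] {x : E} {C : ℝ}
    (hC : 0 ≤ C) (h : ∀ v, ⟪x, v⟫ ≤ C * ‖v‖) : ‖x‖ ≤ C := by
  have := h x
  rw [real_inner_self_eq_norm_sq] at this
  rcases (norm_nonneg x).eq_or_lt with h0 | h0
  · rw [← h0]; exact hC
  · nlinarith

lemma reg_mar {z : (Fin T → Fin d → ℝ) × ℝ} {R B2 r : ℝ} (hR : 0 ≤ R) (hB : 0 ≤ B2) (hr : 0 ≤ r)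
    (hX : ∀ t, Real.sqrt (∑ j, z.1 t j ^ 2) ≤ R) (hy : z.2 = 1 ∨ z.2 = -1)
    {θ0 : Params T d H} (hθ0 : ∀ h, hN θ0 h ≤ B2) :
    Reg (mar z) (mgr z) (Metric.closedBall θ0 r)
      (Real.sqrt T * R * (2 * R ^ 2 * (r + B2) + 1))
      (2 * Real.sqrt T * R ^ 3 * (3 * R ^ 2 * (r + B2) + 1) / Real.sqrt H) := by
  set G := Real.sqrt T * R * (2 * R ^ 2 * (r + B2) + 1) with hG
  set κ := 2 * Real.sqrt T * R ^ 3 * (3 * R ^ 2 * (r + B2) + 1) / Real.sqrt H with hκ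
  have hG0 : 0 ≤ G := by positivity
  have hκ0 : 0 ≤ κ := by positivity
  have hyabs : ∀ c : ℝ, |z.2 * c| = |c| := by
    intro c
    rcases hy with h | h <;> simp [h]
  have hS : ∀ a ∈ Metric.closedBall θ0 r, ∀ h, hN a h ≤ r + B2 := by
    intro a ha h
    rw [mem_closedBall_iff_norm] at ha
    have h1 := hN_add_le (a - θ0) θ0 h
    rw [sub_add_cancel] at h1
    linarith [hN_le_norm (a - θ0) h, hθ0 h]
  have hseg : ∀ a ∈ Metric.closedBall θ0 r, ∀ b ∈ Metric.closedBall θ0 r,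
      ∀ x ∈ Set.Icc (0 : ℝ) 1, a + x • (b - a) ∈ Metric.closedBall θ0 r :=
    fun a ha b hb x hx => (convex_closedBall θ0 r).add_smul_sub_mem ha hb hx
  have hd : ∀ a ∈ Metric.closedBall θ0 r, ∀ v, |dPhi z.1 a v| ≤ G * ‖v‖ :=
    fun a ha v => dPhi_le hX hR (by positivity) a v (hS a ha)
  have hdd : ∀ a ∈ Metric.closedBall θ0 r, ∀ b ∈ Metric.closedBall θ0 r, ∀ v,
      |dPhi z.1 b v - dPhi z.1 a v| ≤ κ * ‖b - a‖ * ‖v‖ := by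
    intro a ha b hb v
    have := norm_image_sub_le_of_norm_deriv_le_segment_01'
      (f := fun x : ℝ => dPhi z.1 (a + x • (b - a)) v) (C := κ * ‖b - a‖ * ‖v‖)
      (fun x _ => (hasDerivAt_dPhi z.1 a v (b - a) x).hasDerivWithinAt)
      (fun x hx => by
        rw [Real.norm_eq_abs]
        refine (ddPhi_le hX hR (M := r + B2) (by positivity) _ _ _
          (hS _ (hseg a ha b hb x ⟨hx.1, hx.2.le⟩))).trans (le_of_eq ?_)
        rw [hκ]; ring)
    simpa using this
  refine ⟨fun a ha => ?_, fun a ha b hb => ?_, fun a ha b hb => ?_, fun a ha b hb => ?_⟩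
  · refine norm_le_of_inner hG0 fun v => ?_
    rw [inner_mgr]
    refine (le_abs_self _).trans ?_
    rw [hyabs]
    exact hd a ha v
  · refine norm_le_of_inner (by positivity) fun v => ?_
    rw [inner_sub_left, inner_mgr, inner_mgr, ← mul_sub]
    refine (le_abs_self _).trans ?_
    rw [hyabs]
    exact hdd b hb a ha v
  · simp only [mar]
    rw [← mul_sub, hyabs]
    have := norm_image_sub_le_of_norm_deriv_le_segment_01'
      (f := fun x : ℝ => mhPhi z.1 (a + x • (b - a))) (C := G * ‖b - a‖)
      (fun x _ => (hasDerivAt_mhPhi z.1 a (b - a) x).hasDerivWithinAt)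
      (fun x hx => hd _ (hseg a ha b hb x ⟨hx.1, hx.2.le⟩) _)
    simpa using this
  · rw [inner_mgr]
    simp only [mar]
    rw [← mul_sub, ← mul_sub, hyabs]
    have := norm_image_sub_le_of_norm_deriv_le_segment_01'
      (f := fun x : ℝ => mhPhi z.1 (a + x • (b - a)) - x * dPhi z.1 a (b - a))
      (f' := fun x : ℝ => dPhi z.1 (a + x • (b - a)) (b - a) - 1 * dPhi z.1 a (b - a))
      (C := κ * ‖b - a‖ ^ 2)
      (fun x _ => ((hasDerivAt_mhPhi z.1 a (b - a) x).sub
        ((hasDerivAt_id x).mul_const _)).hasDerivWithinAt)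
      (fun x hx => by
        rw [Real.norm_eq_abs, one_mul]
        refine (hdd a ha _ (hseg a ha b hb x ⟨hx.1, hx.2.le⟩) (b - a)).trans ?_
        rw [add_sub_cancel_left, norm_smul, Real.norm_of_nonneg hx.1]
        have h1 : x * ‖b - a‖ ≤ ‖b - a‖ := mul_le_of_le_one_left (norm_nonneg _) hx.2.le
        calc _ ≤ κ * ‖b - a‖ * ‖b - a‖ := by gcongr
          _ = _ := by ring)
    have e : mhPhi z.1 b - mhPhi z.1 a - dPhi z.1 a (b - a) =
        mhPhi z.1 (a + (1 : ℝ) • (b - a)) - 1 * dPhi z.1 a (b - a) -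
        (mhPhi z.1 (a + (0 : ℝ) • (b - a)) - 0 * dPhi z.1 a (b - a)) := by
      simp; ring
    rw [e]
    exact this

end Regularity

end MHBounds

/-! ### Exchanging a training sample with a fresh one -/

namespace MHBounds

section Exchange

variable {Z : Type*} [MeasurableSpace Z] {n : ℕ}

/-- Exchanging the `i`-th training sample with an independent fresh sample. -/
def swp (i : Fin n) (p : (Fin n → Z) × Z) : (Fin n → Z) × Z := (Function.update p.1 i p.2, p.1 i)

lemma measurable_swp (i : Fin n) : Measurable (swp (Z := Z) i) := by
  refine Measurable.prodMk ?_ ((measurable_pi_apply i).comp measurable_fst)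
  refine measurable_pi_iff.2 fun j => ?_
  by_cases h : j = i
  · subst h; simpa using measurable_snd
  · simp only [Function.update_of_ne h]
    exact (measurable_pi_apply j).comp measurable_fst

lemma measurePreserving_swp (D : Measure Z) [IsProbabilityMeasure D] (i : Fin n) :
    MeasurePreserving (swp i) ((Measure.pi fun _ : Fin n => D).prod D)
      ((Measure.pi fun _ : Fin n => D).prod D) := by
  refine ⟨measurable_swp i, ?_⟩
  symm
  refine Measure.prod_eq_generateFrom generateFrom_pi MeasurableSpace.generateFrom_measurableSet
    isPiSystem_pi MeasurableSpace.isPiSystem_measurableSet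
    (Measure.FiniteSpanningSetsIn.pi fun _ => D.toFiniteSpanningSetsIn) D.toFiniteSpanningSetsIn ?_
  rintro _ ⟨s, hs, rfl⟩ t ht
  have ht : MeasurableSet t := ht
  have hs' : ∀ j, MeasurableSet (s j) := fun j => hs j (Set.mem_univ j)
  rw [Measure.map_apply (measurable_swp i) ((MeasurableSet.univ_pi hs').prod ht)]
  have e : swp i ⁻¹' (Set.univ.pi s ×ˢ t) = Set.univ.pi (Function.update s i t) ×ˢ s i := by
    ext ⟨ω, z⟩
    simp only [swp, Set.mem_preimage, Set.mem_prod, Set.mem_pi, Set.mem_univ, true_imp_iff]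
    constructor
    · rintro ⟨h1, h2⟩
      refine ⟨fun j => ?_, by simpa using h1 i⟩
      by_cases h : j = i
      · subst h; simpa using h2
      · simpa [Function.update_of_ne h] using h1 j
    · rintro ⟨h1, h2⟩
      refine ⟨fun j => ?_, by simpa using h1 i⟩
      by_cases h : j = i
      · subst h; simpa using h2
      · simpa [Function.update_of_ne h] using h1 j
  rw [e, Measure.prod_prod, Measure.pi_pi, Measure.pi_pi]
  have h1 : ∏ j, D (Function.update s i t j) = D t * ∏ j ∈ univ.erase i, D (s j) := by
    rw [← mul_prod_erase univ _ (mem_univ i), Function.update_self]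
    congr 1
    refine prod_congr rfl fun j hj => ?_
    rw [Function.update_of_ne (ne_of_mem_erase hj)]
  rw [h1, ← mul_prod_erase univ (fun j => D (s j)) (mem_univ i)]
  ring

/-- Generalization from replace-one stability. Exchanging `ω i` with the fresh sample `z` turns the
test loss at `ω` into the loss of the held-out sample `ω i` at the perturbed training set. -/
lemma gen_of_stability (hn : 0 < n) (D : Measure Z) [IsProbabilityMeasure D]
    {p : Z → (Fin n → Z) → ℝ} {q : Fin n → (Fin n → Z) → ℝ} {B C : ℝ}
    (hp : Measurable fun x : (Fin n → Z) × Z => p x.2 x.1)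
    (hpB : ∀ᵐ x ∂((Measure.pi fun _ : Fin n => D).prod D), ‖p x.2 x.1‖ ≤ B)
    (hpB' : ∀ i, ∀ᵐ ω ∂(Measure.pi fun _ : Fin n => D), ‖p (ω i) ω‖ ≤ B)
    (hq : ∀ i, Integrable (q i) (Measure.pi fun _ : Fin n => D))
    (hst : ∀ i, ∀ᵐ x ∂((Measure.pi fun _ : Fin n => D).prod D),
      p (x.1 i) (Function.update x.1 i x.2) - p (x.1 i) x.1 ≤
        C * (q i x.1 + q i (Function.update x.1 i x.2))) :
    ∫ ω, (∫ z, p z ω ∂D - (1 / (n : ℝ)) * ∑ i, p (ω i) ω) ∂(Measure.pi fun _ : Fin n => D) ≤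
      (2 * C / n) * ∫ ω, ∑ i, q i ω ∂(Measure.pi fun _ : Fin n => D) := by
  set P := Measure.pi fun _ : Fin n => D with hP
  have hpI : Integrable (fun x : (Fin n → Z) × Z => p x.2 x.1) (P.prod D) :=
    Integrable.of_bound hp.aestronglyMeasurable B hpB
  have hpI' : ∀ i, Integrable (fun ω => p (ω i) ω) P := fun i =>
    Integrable.of_bound
      (hp.comp (measurable_id.prodMk (measurable_pi_apply i))).aestronglyMeasurable B (hpB' i)
  have hsw : ∀ i, ∀ f : (Fin n → Z) × Z → ℝ, Integrable f (P.prod D) →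
      Integrable (fun x => f (swp i x)) (P.prod D) ∧
        ∫ x, f (swp i x) ∂(P.prod D) = ∫ x, f x ∂(P.prod D) := by
    intro i f hf
    have hm := measurePreserving_swp D i
    refine ⟨hm.integrable_comp_of_integrable hf, ?_⟩
    have hf' : AEStronglyMeasurable f (Measure.map (swp i) (P.prod D)) := by
      rw [hm.map_eq]; exact hf.aestronglyMeasurable
    rw [← integral_map hm.aemeasurable hf', hm.map_eq]
  have hfst : ∀ f : (Fin n → Z) → ℝ, ∫ x, f x.1 ∂(P.prod D) = ∫ ω, f ω ∂P := by
    intro f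
    rw [integral_fun_fst]; simp
  have key : ∀ i, ∫ x, p x.2 x.1 ∂(P.prod D) - ∫ ω, p (ω i) ω ∂P ≤ 2 * C * ∫ ω, q i ω ∂P := by
    intro i
    obtain ⟨h1, h2⟩ := hsw i _ hpI
    have h3 : Integrable (fun x : (Fin n → Z) × Z => p (x.1 i) x.1) (P.prod D) :=
      (hpI' i).comp_fst D
    have h4 : Integrable (fun x : (Fin n → Z) × Z => q i x.1) (P.prod D) := (hq i).comp_fst D
    obtain ⟨h5, h6⟩ := hsw i _ h4
    have h7 := integral_mono_ae (h1.sub h3) ((h4.add h5).const_mul C) (hst i)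
    simp only [Pi.add_apply, Pi.sub_apply] at h7
    rw [integral_sub h1 h3, h2, integral_const_mul, integral_add h4 h5, h6, hfst, hfst fun ω => p (ω i) ω] at h7
    linarith
  have hn' : (n : ℝ) ≠ 0 := by positivity
  rw [integral_sub hpI.integral_prod_left ((integrable_finsetSum _ fun i _ => hpI' i).const_mul _),
    integral_const_mul, integral_finsetSum _ fun i _ => hpI' i,
    integral_finsetSum _ fun i _ => hq i, ← integral_prod _ hpI]
  have h8 : ∑ i : Fin n, (∫ x, p x.2 x.1 ∂(P.prod D) - ∫ ω, p (ω i) ω ∂P) ≤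
      ∑ i, 2 * C * ∫ ω, q i ω ∂P := sum_le_sum fun i _ => key i
  rw [sum_sub_distrib, sum_const, card_univ, Fintype.card_fin, nsmul_eq_mul, ← mul_sum] at h8
  calc _ = (1 / (n : ℝ)) * (n * ∫ x, p x.2 x.1 ∂(P.prod D) - ∑ i, ∫ ω, p (ω i) ω ∂P) := by
        field_simp
    _ ≤ (1 / (n : ℝ)) * (2 * C * ∑ i, ∫ ω, q i ω ∂P) := by gcongr
    _ = _ := by ring

end Exchange

end MHBounds

namespace MHBounds

/-! ### The constants -/

section Constants

lemma step_constants {T d H : ℕ} (hT : 1 ≤ T) (hd : 1 ≤ d) (hH0 : 1 ≤ H) {R B2 g0 η : ℝ}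
    (hR : 1 ≤ R) (hB2 : 1 ≤ B2) (hg0 : 0 < g0)
    (hH : 256 * (d : ℝ) * Real.sqrt ((T : ℝ) * d) * R ^ 3 * B2 *
        (3 * Real.sqrt d * R ^ 2 * (4 * g0 + B2) + 1) * g0 ^ 2 ≤ Real.sqrt H)
    (hη : 0 < η)
    (hη2 : η ≤ 1 /
      ((2 * (d : ℝ) * Real.sqrt ((T : ℝ) * d) * R ^ 3 / Real.sqrt H
          + (T : ℝ) * R ^ 2 / 4) *
        (3 * (d : ℝ) * Real.sqrt d * R ^ 2 *
          (3 * Real.sqrt T * R ^ 3 * (4 * g0 + B2) + 2 * Real.sqrt T * R)) ^ 2)) :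
    η * (Real.sqrt T * R * (2 * R ^ 2 * (4 * g0 + B2) + 1)) ^ 2 ≤ 1 / 5 ∧
    η * (2 * Real.sqrt T * R ^ 3 * (3 * R ^ 2 * (4 * g0 + B2) + 1) / Real.sqrt H) ≤ 1 / 2 ∧
    (2 * Real.sqrt T * R ^ 3 * (3 * R ^ 2 * (4 * g0 + B2) + 1) / Real.sqrt H) * g0 ^ 2
      ≤ 1 / 128 := by
  have hTr : (1 : ℝ) ≤ T := by exact_mod_cast hT
  have hD : (1 : ℝ) ≤ d := by exact_mod_cast hd
  have hHr : (1 : ℝ) ≤ H := by exact_mod_cast hH0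
  have ht : 1 ≤ Real.sqrt T := Real.one_le_sqrt.2 hTr
  have hs : 1 ≤ Real.sqrt d := Real.one_le_sqrt.2 hD
  have hh : 1 ≤ Real.sqrt H := Real.one_le_sqrt.2 hHr
  have hq : Real.sqrt T ≤ Real.sqrt ((T : ℝ) * d) :=
    Real.sqrt_le_sqrt (le_mul_of_one_le_right (by positivity) hD)
  set t := Real.sqrt T
  set s := Real.sqrt d
  set h := Real.sqrt H
  set q := Real.sqrt ((T : ℝ) * d)
  set M := 4 * g0 + B2 with hM
  have hM1 : 1 ≤ M := by linarith
  set A := 3 * (3 * t * R ^ 3 * M + 2 * t * R) with hA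
  set α := 3 * (d : ℝ) * s * R ^ 2 * (3 * t * R ^ 3 * M + 2 * t * R) with hα
  have hR2 : 1 ≤ R ^ 2 := one_le_pow₀ hR
  have hR3 : 1 ≤ R ^ 3 := one_le_pow₀ hR
  have hA0 : 0 ≤ A := by positivity
  have hAα : A ≤ α := by
    have : 1 ≤ (d : ℝ) * s * R ^ 2 := one_le_mul_of_one_le_of_one_le
      (one_le_mul_of_one_le_of_one_le hD hs) hR2
    calc A = 1 * A := by ring
      _ ≤ (d : ℝ) * s * R ^ 2 * A := by gcongr
      _ = α := by rw [hA, hα]; ring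
  have hsq : A ^ 2 ≤ α ^ 2 := by gcongr
  set c1 := 2 * (d : ℝ) * q * R ^ 3 / h with hc1
  have hc1' : 2 * t * R ^ 3 / h ≤ c1 := by
    rw [hc1]
    have : 2 * t ≤ 2 * (d : ℝ) * q := by
      calc 2 * t = 2 * 1 * t := by ring
        _ ≤ _ := by gcongr
    gcongr
  have hc2 : 1 / 4 ≤ (T : ℝ) * R ^ 2 / 4 := by
    have := one_le_mul_of_one_le_of_one_le hTr hR2
    linarith
  set c2 := (T : ℝ) * R ^ 2 / 4
  have hc0 : 0 < 2 * t * R ^ 3 / h := by positivity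
  have hApos : 0 < A := by positivity
  have hρ : 0 < (c1 + c2) * α ^ 2 := by
    have : 0 < α := hApos.trans_le hAα
    have : 0 < c1 + c2 := by linarith
    positivity
  have hηρ : η * ((c1 + c2) * α ^ 2) ≤ 1 := (le_div_iff₀ hρ).1 hη2
  have hρ1 : 1 / 4 * A ^ 2 ≤ (c1 + c2) * α ^ 2 := by
    have : 1 / 4 ≤ c1 + c2 := by linarith
    gcongr
  have hρ2 : 2 * t * R ^ 3 / h * A ^ 2 ≤ (c1 + c2) * α ^ 2 := by
    have : 2 * t * R ^ 3 / h ≤ c1 + c2 := by linarith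
    gcongr
  refine ⟨?_, ?_, ?_⟩
  · have hG : 9 / 2 * (t * R * (2 * R ^ 2 * M + 1)) ≤ A := by
      have h0 : 0 ≤ t * R := by positivity
      have e : A - 9 / 2 * (t * R * (2 * R ^ 2 * M + 1)) = 3 / 2 * (t * R) := by rw [hA]; ring
      linarith
    have hG2 : (9 / 2 * (t * R * (2 * R ^ 2 * M + 1))) ^ 2 ≤ A ^ 2 := by gcongr
    have : 5 * (t * R * (2 * R ^ 2 * M + 1)) ^ 2 ≤ (c1 + c2) * α ^ 2 := by
      rw [mul_pow] at hG2
      have := sq_nonneg (t * R * (2 * R ^ 2 * M + 1))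
      linarith
    have := mul_le_mul_of_nonneg_left this hη.le
    linarith
  · have hA1 : 2 * (3 * R ^ 2 * M + 1) ≤ A := by
      have h1 : R ^ 2 * M ≤ t * R ^ 3 * M := by
        have : R ^ 2 ≤ t * R ^ 3 := by
          calc R ^ 2 = 1 * (R ^ 2 * 1) := by ring
            _ ≤ t * (R ^ 2 * R) := by gcongr
            _ = t * R ^ 3 := by ring
        gcongr
      have h2 : 1 ≤ t * R := one_le_mul_of_one_le_of_one_le ht hR
      have h3 : 0 ≤ R ^ 2 * M := by positivity
      have e : A = 9 * (t * R ^ 3 * M) + 6 * (t * R) := by rw [hA]; ring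
      linarith
    have hA2 : 2 * (3 * R ^ 2 * M + 1) ≤ A ^ 2 := by
      have : 1 ≤ A := by
        have : 0 ≤ R ^ 2 * M := by positivity
        linarith
      calc _ ≤ A := hA1
        _ ≤ A ^ 2 := le_self_pow₀ this two_ne_zero
    have h4 := mul_le_mul_of_nonneg_left hA2 hc0.le
    have h5 := mul_le_mul_of_nonneg_left (h4.trans hρ2) hη.le
    calc η * (2 * t * R ^ 3 * (3 * R ^ 2 * M + 1) / h)
        = (η * (2 * t * R ^ 3 / h * (2 * (3 * R ^ 2 * M + 1)))) / 2 := by ring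
      _ ≤ 1 / 2 := by linarith
  · have h1 : 256 * t * R ^ 3 * (3 * R ^ 2 * M + 1) * g0 ^ 2 ≤ h := by
      refine le_trans ?_ hH
      have e1 : 256 * t * R ^ 3 ≤ 256 * (d : ℝ) * q * R ^ 3 * B2 := by
        calc 256 * t * R ^ 3 = 256 * 1 * t * R ^ 3 * 1 := by ring
          _ ≤ _ := by gcongr
      have e2 : 3 * R ^ 2 * M + 1 ≤ 3 * s * R ^ 2 * M + 1 := by
        calc 3 * R ^ 2 * M + 1 = 3 * 1 * R ^ 2 * M + 1 := by ring
          _ ≤ _ := by gcongr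
      gcongr
    have hh0 : 0 < h := by linarith
    rw [div_mul_eq_mul_div, div_le_iff₀ hh0]
    linarith

/-- The loss-dependent step-size condition compares `η` with `g₀²`, as `log (1 + e^BΦ) ≥ 1`. -/
lemma step_le_sq {BΦ γ L η : ℝ} (hB : 1 ≤ BΦ) (hγ : 0 < γ) (hL : 0 ≤ L)
    (hη : η ≤ 4 * BΦ ^ 2 / (γ ^ 2 * Real.log (1 + Real.exp BΦ))) :
    η ≤ ((2 * BΦ + L) / γ) ^ 2 := by
  have h1 : 1 ≤ Real.log (1 + Real.exp BΦ) := by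
    rw [Real.le_log_iff_exp_le (by positivity)]
    have := Real.exp_le_exp.2 hB
    linarith
  refine hη.trans ?_
  rw [div_pow]
  have h2 : 4 * BΦ ^ 2 ≤ (2 * BΦ + L) ^ 2 := by nlinarith
  have h3 : γ ^ 2 ≤ γ ^ 2 * Real.log (1 + Real.exp BΦ) := le_mul_of_one_le_right (by positivity) h1
  gcongr

end Constants

/-! ### Good initialization for a fixed training set -/

section Deterministic

variable {T d H n : ℕ}

/-- All consequences of a good initialization that hold for a fixed training set: the margins are
regular on the ball of radius `4g₀`, the iterates stay in it, and the path loss is controlled. -/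
structure Tame (θ0 : Params T d H) (g0 G κ η BΦ : ℝ) (K : ℕ)
    (ω : Fin n → (Fin T → Fin d → ℝ) × ℝ) (θ : ℕ → Params T d H) : Prop where
  reg : ∀ i, Reg (mar (H := H) (ω i)) (mgr (ω i)) (Metric.closedBall θ0 (4 * g0)) G κ
  start : ∀ i, |mar (ω i) θ0| ≤ BΦ
  ball : ∀ k ≤ K, θ k ∈ Metric.closedBall θ0 (4 * g0)
  path : η * ∑ m ∈ range K, pl mar ω univ (θ m) ≤ 5 / 4 * (η + g0 ^ 2)
  last : K * pl mar ω univ (θ K) ≤ ∑ m ∈ range K, pl mar ω univ (θ m)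

/-- Separability forces the token count, the dimension and the number of heads to be positive:
otherwise the gradient or the direction `θ⋆` would vanish. -/
lemma dims_pos (hn : 0 < n) {ω : Fin n → (Fin T → Fin d → ℝ) × ℝ} {θ0 : Params T d H}
    {B2 BΦ γ : ℝ} (hg : GoodInit (fun i => (ω i).1) (fun i => (ω i).2) θ0 B2 BΦ γ) :
    1 ≤ T ∧ 1 ≤ d ∧ 1 ≤ H := by
  obtain ⟨-, -, hγ, -, -, θs, hθs, hsep⟩ := hg
  have hne : θs ≠ 0 := by
    rintro rfl
    rw [norm_zero] at hθs
    have := Real.sqrt_pos.2 (two_pos : (0 : ℝ) < 2)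
    linarith
  refine ⟨?_, ?_, ?_⟩
  · rw [Nat.one_le_iff_ne_zero]
    rintro rfl
    have := hsep ⟨0, hn⟩
    rw [inner_gradient_mhPhi] at this
    simp [dPhi] at this
    linarith
  · rw [Nat.one_le_iff_ne_zero]
    rintro rfl
    exact hne (by ext ⟨h, p⟩; rcases p with p | p <;> exact p.2.elim0)
  · rw [Nat.one_le_iff_ne_zero]
    rintro rfl
    exact hne (by ext ⟨h, p⟩; exact h.elim0)

lemma tame_of_good (hn : 0 < n) {R B2 BΦ γ η g0 G κ : ℝ} (hR : 1 ≤ R) {K : ℕ} (hK : 1 ≤ K)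
    {θ0 : Params T d H} {ω : Fin n → (Fin T → Fin d → ℝ) × ℝ} {θ : ℕ → Params T d H}
    (hgood : GoodInit (fun i => (ω i).1) (fun i => (ω i).2) θ0 B2 BΦ γ)
    (hbd : BoundedData (fun i => (ω i).1) (fun i => (ω i).2) R)
    (hg0 : g0 = (2 * BΦ + Real.log K) / γ)
    (hG : G = Real.sqrt T * R * (2 * R ^ 2 * (4 * g0 + B2) + 1))
    (hκ : κ = 2 * Real.sqrt T * R ^ 3 * (3 * R ^ 2 * (4 * g0 + B2) + 1) / Real.sqrt H)
    (hη : 0 < η) (hηG : η * G ^ 2 ≤ 1 / 5) (hηκ : η * κ ≤ 1 / 2) (hκg : κ * g0 ^ 2 ≤ 1 / 128)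
    (hηg : η ≤ g0 ^ 2) (h0 : θ 0 = θ0)
    (hs : ∀ k, θ (k + 1) = θ k - η • pg mar mgr ω univ (θ k)) :
    Tame θ0 g0 G κ η BΦ K ω θ := by
  obtain ⟨hB2, hBΦ, hγ, hθ0, hΦ, θs, hθs, hsep⟩ := hgood
  obtain ⟨-, hy, hX⟩ := hbd
  have hK1 : (1 : ℝ) ≤ K := by exact_mod_cast hK
  have hlog : 0 ≤ Real.log K := Real.log_nonneg hK1
  have hg0p : 0 < g0 := by rw [hg0]; positivity
  have hκ0 : 0 ≤ κ := by rw [hκ]; positivity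
  have hreg : ∀ i, Reg (mar (H := H) (ω i)) (mgr (ω i)) (Metric.closedBall θ0 (4 * g0)) G κ := by
    intro i
    rw [hG, hκ]
    exact reg_mar (by linarith) (by linarith) (by positivity) (hX i) (hy i) hθ0
  have hinit : ∀ i, |mar (ω i) θ0| ≤ BΦ := by
    intro i
    have := hΦ i
    rcases hy i with h | h <;> simp only at h <;> simpa [mar, h] using this
  have hns : ‖θs‖ ^ 2 = 2 := by rw [hθs]; exact Real.sq_sqrt (by norm_num)
  have ha : ‖θ0 + g0 • θs - θ0‖ ^ 2 = 2 * g0 ^ 2 := by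
    rw [add_sub_cancel_left, norm_smul, mul_pow, hns, Real.norm_of_nonneg hg0p.le]; ring
  have hmem0 : θ0 ∈ Metric.closedBall θ0 (4 * g0) := Metric.mem_closedBall_self (by positivity)
  have hmem : θ0 + g0 • θs ∈ Metric.closedBall θ0 (4 * g0) := by
    rw [mem_closedBall_iff_norm]
    refine abs_le_of_sq_le_sq' ?_ (by positivity) |>.2
    rw [ha]; nlinarith [sq_nonneg g0]
  -- the linearization gains `g₀γ = 2BΦ + log K`, of which `BΦ` pays for the initial margin
  -- and the remaining `BΦ ≥ 1` for the curvature
  have hmar : ∀ i, Real.log K ≤ mar (ω i) (θ0 + g0 • θs) := by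
    intro i
    have h1 := (abs_le.1 ((hreg i).taylor _ hmem0 _ hmem)).1
    rw [ha, add_sub_cancel_left, real_inner_smul_right, inner_mgr] at h1
    have h2 := (abs_le.1 (hinit i)).1
    have h3 := hsep i
    rw [inner_gradient_mhPhi] at h3
    have h4 := mul_le_mul_of_nonneg_left h3 hg0p.le
    have h5 : g0 * γ = 2 * BΦ + Real.log K := by rw [hg0]; field_simp
    nlinarith
  have haL : pl mar ω univ (θ0 + g0 • θs) ≤ 1 / K := by
    have h1 : ∀ i, lg (mar (ω i) (θ0 + g0 • θs)) ≤ 1 / K := by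
      intro i
      refine (lg_le_exp _).trans ?_
      calc Real.exp (-mar (ω i) (θ0 + g0 • θs)) ≤ Real.exp (-Real.log K) :=
            Real.exp_le_exp.2 (neg_le_neg (hmar i))
        _ = 1 / K := by rw [Real.exp_neg, Real.exp_log (by linarith), one_div]
    have hn' : (0 : ℝ) < n := by exact_mod_cast hn
    calc pl mar ω univ (θ0 + g0 • θs) ≤ (1 / (n : ℝ)) * ∑ _i : Fin n, (1 / (K : ℝ)) := by
          unfold pl
          exact mul_le_mul_of_nonneg_left (sum_le_sum fun i _ => h1 i) (by positivity)
      _ = 1 / K := by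
          rw [sum_const, card_univ, Fintype.card_fin, nsmul_eq_mul]; field_simp
  obtain ⟨h1, h2, h3⟩ := gd_train hK hκ0 hη hg0p hηG hηκ hκg hηg hreg h0 hs ha haL
  exact ⟨hreg, hinit, h1, h2, h3⟩

end Deterministic

/-! ### Measurability of the iterates in the training set -/

section Measurability

variable {T d H n : ℕ}

lemma continuous_mar :
    Continuous fun p : ((Fin T → Fin d → ℝ) × ℝ) × Params T d H => mar p.1 p.2 := by
  have h1 : Continuous fun p : ((Fin T → Fin d → ℝ) × ℝ) × Params T d H => (p.1.1, p.2) :=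
    (continuous_fst.comp continuous_fst).prodMk continuous_snd
  have h2 : Continuous fun p : ((Fin T → Fin d → ℝ) × ℝ) × Params T d H => p.1.2 :=
    continuous_snd.comp continuous_fst
  have h3 := continuous_mhPhi.comp h1
  exact h2.mul h3

lemma continuous_lg : Continuous lg :=
  continuous_iff_continuousAt.2 fun x => (hasDerivAt_lg x).continuousAt

lemma measurable_iterates {η : ℝ} {θ0 : Params T d H}
    {θseq : (Fin n → (Fin T → Fin d → ℝ) × ℝ) → ℕ → Params T d H}
    (hinit : ∀ ω, θseq ω 0 = θ0)
    (hstep : ∀ ω k, θseq ω (k + 1) = θseq ω k -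
      η • gradient (empLoss (fun i => (ω i).1) (fun i => (ω i).2)) (θseq ω k)) (k : ℕ) :
    Measurable fun ω => θseq ω k := by
  have hcont : Continuous (Function.uncurry
      fun (ω : Fin n → (Fin T → Fin d → ℝ) × ℝ) (θ : Params T d H) =>
        empLoss (fun i => (ω i).1) (fun i => (ω i).2) θ) := by
    refine continuous_const.mul (continuous_finsetSum _ fun i _ => ?_)
    have h1 : Continuous fun p : (Fin n → (Fin T → Fin d → ℝ) × ℝ) × Params T d H =>
        (p.1 i, p.2) := ((continuous_apply i).comp continuous_fst).prodMk continuous_snd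
    have h2 := continuous_lg.comp (continuous_mar.comp h1)
    exact h2
  have hgrad := measurable_fderiv_with_param ℝ hcont
  induction k with
  | zero => simp only [hinit]; exact measurable_const
  | succ k ih =>
    simp only [hstep]
    refine ih.sub (Measurable.const_smul ?_ η)
    have h1 := hgrad.comp (measurable_id.prodMk ih)
    exact (InnerProductSpace.toDual ℝ (Params T d H)).symm.continuous.measurable.comp h1

end Measurability

end MHBounds

namespace MHBounds

/-! ### The expected generalization gap -/

section Generalization

variable {T d H n : ℕ}

lemma sum_path_eq (hn : 0 < n) {K : ℕ} (ω : Fin n → (Fin T → Fin d → ℝ) × ℝ)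
    (θ : ℕ → Params T d H) :
    ∑ i, ∑ m ∈ range K, lg (mar (ω i) (θ m)) = n * ∑ m ∈ range K, pl mar ω univ (θ m) := by
  have hn' : (n : ℝ) ≠ 0 := by positivity
  unfold pl
  rw [sum_comm, mul_sum]
  refine sum_congr rfl fun m _ => ?_
  field_simp

/-- On-average stability of gradient descent turned into an expected generalization bound. -/
lemma gen_bound (hn : 0 < n) (D : Measure ((Fin T → Fin d → ℝ) × ℝ)) [IsProbabilityMeasure D]
    {θ0 : Params T d H} {g0 G κ η BΦ : ℝ} {K : ℕ}
    {θseq : (Fin n → (Fin T → Fin d → ℝ) × ℝ) → ℕ → Params T d H}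
    (hinit : ∀ ω, θseq ω 0 = θ0)
    (hs : ∀ ω k, θseq ω (k + 1) = θseq ω k - η • pg mar mgr ω univ (θseq ω k))
    (hmeas : ∀ k, Measurable fun ω => θseq ω k)
    (hκ : 0 ≤ κ) (hG : 0 ≤ G) (hη : 0 < η) (hg0 : 0 < g0)
    (hηG : η * G ^ 2 ≤ 1 / 5) (hηκ : η * κ ≤ 1 / 2) (hκg : κ * g0 ^ 2 ≤ 1 / 128)
    (hηg : η ≤ g0 ^ 2)
    (htame : ∀ᵐ ω ∂(Measure.pi fun _ : Fin n => D), Tame θ0 g0 G κ η BΦ K ω (θseq ω)) :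
    ∫ ω, (∫ z, lg (mar z (θseq ω K)) ∂D - pl mar ω univ (θseq ω K))
      ∂(Measure.pi fun _ : Fin n => D) ≤ 2 * g0 ^ 2 / (η * n) := by
  set P := Measure.pi fun _ : Fin n => D with hP
  have hn' : (0 : ℝ) < n := by exact_mod_cast hn
  have hpair : ∀ i, ∀ᵐ x ∂(P.prod D), Tame θ0 g0 G κ η BΦ K x.1 (θseq x.1) ∧
      Tame θ0 g0 G κ η BΦ K (Function.update x.1 i x.2) (θseq (Function.update x.1 i x.2)) := by
    intro i
    have h1 : ∀ᵐ x ∂(P.prod D), Tame θ0 g0 G κ η BΦ K x.1 (θseq x.1) :=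
      Measure.quasiMeasurePreserving_fst.ae htame
    have h2 := (measurePreserving_swp D i).quasiMeasurePreserving.ae h1
    filter_upwards [h1, h2] with x hx1 hx2 using ⟨hx1, hx2⟩
  have hpath : ∀ ω, Tame θ0 g0 G κ η BΦ K ω (θseq ω) →
      η * ∑ m ∈ range K, pl mar ω univ (θseq ω m) ≤ 5 / 2 * g0 ^ 2 := by
    intro ω h
    linarith [h.path]
  -- a margin starting in `[-BΦ, BΦ]` moves by at most `4 g₀ G` inside the ball
  have hbound : ∀ (z : (Fin T → Fin d → ℝ) × ℝ) (θ : Params T d H),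
      Reg (mar (H := H) z) (mgr z) (Metric.closedBall θ0 (4 * g0)) G κ → |mar z θ0| ≤ BΦ →
      θ ∈ Metric.closedBall θ0 (4 * g0) →
      ‖lg (mar z θ)‖ ≤ lg 0 + (BΦ + G * (4 * g0)) := by
    intro z θ hr h0 hθ
    rw [Real.norm_of_nonneg (lg_pos _).le]
    have h1 := (le_abs_self _).trans (lg_lip 0 (mar z θ))
    have h2 := hr.lip θ0 (Metric.mem_closedBall_self (by positivity)) θ hθ
    rw [mem_closedBall_iff_norm] at hθ
    have h3 : G * ‖θ - θ0‖ ≤ G * (4 * g0) := by gcongr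
    have h4 := abs_sub_abs_le_abs_sub (mar z θ) (mar z θ0)
    rw [sub_zero] at h1
    linarith
  have hqm : ∀ i, Measurable fun ω : Fin n → (Fin T → Fin d → ℝ) × ℝ =>
      ∑ m ∈ range K, lg (mar (ω i) (θseq ω m)) := by
    intro i
    refine Finset.measurable_sum _ fun m _ => ?_
    have h1 := (continuous_lg.comp (continuous_mar (T := T) (d := d) (H := H))).measurable
    have h2 := h1.comp ((measurable_pi_apply i).prodMk (hmeas m))
    exact h2
  have hqb : ∀ ω, Tame θ0 g0 G κ η BΦ K ω (θseq ω) →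
      ∑ i, ∑ m ∈ range K, lg (mar (ω i) (θseq ω m)) ≤ n * (5 / 2 * g0 ^ 2 / η) := by
    intro ω h
    rw [sum_path_eq hn]
    gcongr
    rw [le_div_iff₀ hη, mul_comm]
    exact hpath ω h
  have hq0 : ∀ i (ω : Fin n → (Fin T → Fin d → ℝ) × ℝ),
      0 ≤ ∑ m ∈ range K, lg (mar (ω i) (θseq ω m)) :=
    fun i ω => sum_nonneg fun m _ => (lg_pos _).le
  have hqI : ∀ i, Integrable (fun ω => ∑ m ∈ range K, lg (mar (ω i) (θseq ω m))) P := by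
    intro i
    refine Integrable.of_bound (hqm i).aestronglyMeasurable (n * (5 / 2 * g0 ^ 2 / η)) ?_
    filter_upwards [htame] with ω h
    rw [Real.norm_of_nonneg (hq0 i ω)]
    exact (single_le_sum (f := fun i => ∑ m ∈ range K, lg (mar (ω i) (θseq ω m)))
      (fun j _ => hq0 j ω) (mem_univ i)).trans (hqb ω h)
  have hpm : Measurable fun x : (Fin n → (Fin T → Fin d → ℝ) × ℝ) × ((Fin T → Fin d → ℝ) × ℝ) =>
      lg (mar x.2 (θseq x.1 K)) := by
    have h1 := (continuous_lg.comp (continuous_mar (T := T) (d := d) (H := H))).measurable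
    have h2 := h1.comp (measurable_snd.prodMk ((hmeas K).comp measurable_fst))
    exact h2
  have hmain := gen_of_stability hn D (p := fun z ω => lg (mar z (θseq ω K)))
    (q := fun i ω => ∑ m ∈ range K, lg (mar (ω i) (θseq ω m)))
    (B := lg 0 + (BΦ + G * (4 * g0))) (C := 2 * (η * G ^ 2) / n) hpm ?_ ?_ hqI ?_
  · refine hmain.trans ?_
    have h1 : ∫ ω, ∑ i, ∑ m ∈ range K, lg (mar (ω i) (θseq ω m)) ∂P ≤
        ∫ _ω, n * (5 / 2 * g0 ^ 2 / η) ∂P :=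
      integral_mono_ae (integrable_finsetSum _ fun i _ => hqI i) (integrable_const _)
        (by filter_upwards [htame] with ω h using hqb ω h)
    rw [integral_const, probReal_univ, one_smul] at h1
    calc _ ≤ 2 * (2 * (1 / 5) / n) / n * (n * (5 / 2 * g0 ^ 2 / η)) := by
          refine mul_le_mul ?_ h1 (integral_nonneg fun ω => sum_nonneg fun i _ => hq0 i ω)
            (by positivity)
          gcongr
      _ = _ := by field_simp
  · filter_upwards [hpair ⟨0, hn⟩] with x hx
    have h1 := hx.2.reg ⟨0, hn⟩
    have h2 := hx.2.start ⟨0, hn⟩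
    rw [Function.update_self] at h1 h2
    exact hbound _ _ h1 h2 (hx.1.ball K le_rfl)
  · intro i
    filter_upwards [htame] with ω h
    exact hbound _ _ (h.reg i) (h.start i) (h.ball K le_rfl)
  · intro i
    filter_upwards [hpair i] with x hx
    obtain ⟨hx, hx'⟩ := hx
    have h1 := gd_stability (K := K) hκ hG hη hηG hηκ hκg (ω := x.1)
      (ω' := Function.update x.1 i x.2)
      (fun j hj => Function.update_of_ne hj _ _) hx.reg hx'.reg (by rw [hinit, hinit])
      (hs _) (hs _) hx.ball hx'.ball (hpath _ hx) (hpath _ hx')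
    have h2 := (le_abs_self _).trans (lg_lip (mar (x.1 i) (θseq x.1 K))
      (mar (x.1 i) (θseq (Function.update x.1 i x.2) K)))
    have h3 := (hx.reg i).lip _ (hx.ball K le_rfl) _ (hx'.ball K le_rfl)
    rw [norm_sub_rev] at h3
    have h4 := mul_le_mul_of_nonneg_left h1 hG
    refine (h2.trans (h3.trans h4)).trans (le_of_eq ?_)
    rw [sum_add_distrib]
    ring

end Generalization

end MHBounds

/-- **Bounds under good initialization.** Suppose `θ̃⁰` is a good
initialization with parameters `(B₂, BΦ, γ)` and the bounded-data assumption holds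
(the training set consists of `n` i.i.d. samples from `D`, and these properties hold
almost surely over the training set). Fix `K ≥ 1`, set `g₀ = (2BΦ + log K)/γ`, and
suppose `√H ≥ 256 d √(T d) R³ B₂ (3 √d R² (4 g₀ + B₂) + 1) g₀²` and the step size
satisfies `η ≤ min{1, 1/ρ(K), 4BΦ²/(γ² log(1 + e^{BΦ}))}` with
`α(K) := 3 d √d R² [3 √T R³ (4 g₀ + B₂) + 2 √T R]` and
`ρ(K) := (2 d √(T d) R³/√H + T R²/4) α(K)²`. Then the GD iterates satisfy
`L̂(θ̃^(K)) ≤ 2/K + 5 (2BΦ + log K)²/(4 γ² η K)` (almost surely), and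
`E[L(θ̃^(K)) − L̂(θ̃^(K))] ≤ 17 (2BΦ + log K)²/(γ² η n)`. -/
theorem multihead_bounds_good_init {T d H n : ℕ} (hn : 0 < n)
    (D : Measure ((Fin T → Fin d → ℝ) × ℝ)) [IsProbabilityMeasure D]
    (R B2 BΦ γ : ℝ) (hR : 1 ≤ R)
    (K : ℕ) (hK : 1 ≤ K) (θ0 : Params T d H)
    (hgood : ∀ᵐ ω ∂(Measure.pi fun _ : Fin n => D),
      GoodInit (fun i => (ω i).1) (fun i => (ω i).2) θ0 B2 BΦ γ ∧
      BoundedData (fun i => (ω i).1) (fun i => (ω i).2) R)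
    (hH : 256 * (d : ℝ) * Real.sqrt ((T : ℝ) * d) * R ^ 3 * B2 *
        (3 * Real.sqrt d * R ^ 2 * (4 * ((2 * BΦ + Real.log K) / γ) + B2) + 1) *
        ((2 * BΦ + Real.log K) / γ) ^ 2 ≤ Real.sqrt H)
    (η : ℝ) (hη : 0 < η) (hη1 : η ≤ 1)
    (hη2 : η ≤ 1 /
      ((2 * (d : ℝ) * Real.sqrt ((T : ℝ) * d) * R ^ 3 / Real.sqrt H
          + (T : ℝ) * R ^ 2 / 4) *
        (3 * (d : ℝ) * Real.sqrt d * R ^ 2 *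
          (3 * Real.sqrt T * R ^ 3 * (4 * ((2 * BΦ + Real.log K) / γ) + B2)
            + 2 * Real.sqrt T * R)) ^ 2))
    (hη3 : η ≤ 4 * BΦ ^ 2 / (γ ^ 2 * Real.log (1 + Real.exp BΦ)))
    (θseq : (Fin n → (Fin T → Fin d → ℝ) × ℝ) → ℕ → Params T d H)
    (hinit : ∀ ω, θseq ω 0 = θ0)
    (hstep : ∀ ω k, θseq ω (k + 1) = θseq ω k -
      η • gradient (empLoss (fun i => (ω i).1) (fun i => (ω i).2)) (θseq ω k)) :
    (∀ᵐ ω ∂(Measure.pi fun _ : Fin n => D),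
      empLoss (fun i => (ω i).1) (fun i => (ω i).2) (θseq ω K) ≤
        2 / (K : ℝ) + 5 * (2 * BΦ + Real.log K) ^ 2 / (4 * γ ^ 2 * η * K)) ∧
    ∫ ω, (testLoss D (θseq ω K) -
        empLoss (fun i => (ω i).1) (fun i => (ω i).2) (θseq ω K))
        ∂(Measure.pi fun _ : Fin n => D) ≤
      17 * (2 * BΦ + Real.log K) ^ 2 / (γ ^ 2 * η * n) := by
  set g0 := (2 * BΦ + Real.log K) / γ with hg0
  set G := Real.sqrt T * R * (2 * R ^ 2 * (4 * g0 + B2) + 1) with hG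
  set κ := 2 * Real.sqrt T * R ^ 3 * (3 * R ^ 2 * (4 * g0 + B2) + 1) / Real.sqrt H with hκ
  obtain ⟨ω₀, hω₀, -⟩ := hgood.exists
  obtain ⟨hT, hd, hH0⟩ := MHBounds.dims_pos hn hω₀
  obtain ⟨hB2, hBΦ, hγ, -⟩ := hω₀
  have hK0 : (0 : ℝ) < K := by exact_mod_cast hK
  have hn0 : (0 : ℝ) < n := by exact_mod_cast hn
  have hlog : 0 ≤ Real.log K := Real.log_nonneg (by exact_mod_cast hK)
  have hg0p : 0 < g0 := by rw [hg0]; positivity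
  have hG0 : 0 ≤ G := by positivity
  have hκ0 : 0 ≤ κ := by positivity
  obtain ⟨hηG, hηκ, hκg⟩ := MHBounds.step_constants hT hd hH0 hR hB2 hg0p hH hη hη2
  have hηg : η ≤ g0 ^ 2 := MHBounds.step_le_sq hBΦ hγ hlog hη3
  have hs : ∀ ω k, θseq ω (k + 1) = θseq ω k -
      η • MHBounds.pg MHBounds.mar MHBounds.mgr ω univ (θseq ω k) := by
    intro ω k
    rw [hstep, MHBounds.gradient_empLoss]
  have htame : ∀ᵐ ω ∂(Measure.pi fun _ : Fin n => D),
      MHBounds.Tame θ0 g0 G κ η BΦ K ω (θseq ω) := by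
    filter_upwards [hgood] with ω h
    exact MHBounds.tame_of_good hn hR hK h.1 h.2 hg0 hG hκ hη hηG hηκ hκg hηg (hinit ω) (hs ω)
  constructor
  · filter_upwards [htame] with ω h
    rw [MHBounds.empLoss_eq]
    have h1 := mul_le_mul_of_nonneg_left h.last hη.le
    have h2 := h1.trans h.path
    have e : 2 / (K : ℝ) + 5 * (2 * BΦ + Real.log K) ^ 2 / (4 * γ ^ 2 * η * K) =
        (2 * η + 5 / 4 * g0 ^ 2) / (η * K) := by
      rw [hg0]; field_simp
    rw [e, le_div_iff₀ (by positivity)]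
    linarith
  · have h := MHBounds.gen_bound hn D hinit hs (MHBounds.measurable_iterates hinit hstep) hκ0 hG0
      hη hg0p hηG hηκ hκg hηg htame
    refine le_trans h ?_
    have e : 17 * (2 * BΦ + Real.log K) ^ 2 / (γ ^ 2 * η * n) = 17 * g0 ^ 2 / (η * n) := by
      rw [hg0]; field_simp
    rw [e]
    gcongr
    norm_num
end

section
/- Generalized local quasi-convexity of the attention empirical risk: assume the bounded-data assumption, and let θ̃_1, θ̃_2 ∈ R^{H(Td+d²)} be two points satisfying 2 · max{β3(θ̃_1), β3(θ̃_2)} · ‖θ̃_1 − θ̃_2‖² ≤ √H, where β3(θ̃) := 2 d √(T d) R³ (3 √d R² ‖θ̃‖_{2,∞} + 1). Then max over the line segment [θ̃_1, θ̃_2] of L̂ satisfies max_{θ̃ ∈ [θ̃_1, θ̃_2]} L̂(θ̃) ≤ (4/3) · max{L̂(θ̃_1), L̂(θ̃_2)}. -/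
/-!
Along the segment from `θ₂` to `θ₁`, each head is a sum over query tokens `t` of softmax averages
`E_x[c + x v]` whose logits `a + x b` are affine in the segment parameter `x`. The second
derivative of such an average is `κ₃(b, b, c + x v) + 2 Cov(b, v)`, a third mixed cumulant plus a
covariance, hence at most `6 B² C + 4 B V` in absolute value when `|b| ≤ B`, `|c + x v| ≤ C` and
`|v| ≤ V` (`softAvg_chord`). Cauchy–Schwarz over tokens and heads turns this into a bound by
`2 max β₃ · ‖θ₁ - θ₂‖² / √H ≤ 1` for the second derivative of the whole model, so on every sample
the model stays within `1 / 8` of its chord (`mhPhi_chord`).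

The logistic loss `ℓ` is convex and decreasing, and by Bernoulli's inequality a loss of `1 / 8` in
the margin multiplies `ℓ` by at most `exp (1 / 8) ≤ 4 / 3` (`logistic_le_of_near`). Therefore every
sample loss on the segment is at most `4 / 3` times its chord. Averaging over the samples bounds
the risk by `4 / 3` times a convex combination of the risks at the endpoints.
-/

open Finset
open scoped RealInnerProductSpace

/-! ### Chords of functions with bounded second derivative -/

/-- A function whose second derivative is at least `-K` on `[0, 1]` lies at most `K / 8` above
its chord. -/
lemma le_chord_add_of_neg_le_deriv2 {f f' f'' : ℝ → ℝ} {K : ℝ}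
    (hf : ∀ x, HasDerivAt f (f' x) x) (hf' : ∀ x, HasDerivAt f' (f'' x) x)
    (hK : ∀ x ∈ Set.Icc (0 : ℝ) 1, -K ≤ f'' x) (hK0 : 0 ≤ K) {α : ℝ}
    (hα : α ∈ Set.Icc (0 : ℝ) 1) :
    f α ≤ α * f 1 + (1 - α) * f 0 + K / 8 := by
  have hg : ∀ x, HasDerivAt (fun x => f x + K / 2 * x ^ 2) (f' x + K * x) x := fun x => by
    refine ((hf x).add ((hasDerivAt_pow 2 x).const_mul (K / 2))).congr_deriv ?_
    norm_num
    ring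
  have hg' : ∀ x, HasDerivAt (fun x => f' x + K * x) (f'' x + K) x := fun x => by
    refine ((hf' x).add ((hasDerivAt_id x).const_mul K)).congr_deriv ?_
    ring
  have hderiv : deriv (fun x => f x + K / 2 * x ^ 2) = fun x => f' x + K * x :=
    funext fun x => (hg x).deriv
  have hconv : ConvexOn ℝ (Set.Icc (0 : ℝ) 1) (fun x => f x + K / 2 * x ^ 2) := by
    refine convexOn_of_deriv2_nonneg' (convex_Icc 0 1)
      (fun x _ => (hg x).differentiableAt.differentiableWithinAt) ?_ ?_
    · rw [hderiv]
      exact fun x _ => (hg' x).differentiableAt.differentiableWithinAt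
    · intro x hx
      simp only [Function.iterate_succ, Function.iterate_zero, Function.comp_apply, id, hderiv]
      rw [(hg' x).deriv]
      linarith [hK x hx]
  have h := hconv.2 (Set.right_mem_Icc.2 zero_le_one) (Set.left_mem_Icc.2 zero_le_one)
    hα.1 (sub_nonneg.2 hα.2) (by ring)
  simp only [smul_eq_mul, mul_one, mul_zero, add_zero] at h
  nlinarith [mul_nonneg hK0 (sq_nonneg (α - 1 / 2))]

/-- A function with `|f''| ≤ K` on `[0, 1]` deviates from its chord by at most `K / 8`. -/
lemma abs_sub_chord_le {f f' f'' : ℝ → ℝ} {K : ℝ}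
    (hf : ∀ x, HasDerivAt f (f' x) x) (hf' : ∀ x, HasDerivAt f' (f'' x) x)
    (hK : ∀ x ∈ Set.Icc (0 : ℝ) 1, |f'' x| ≤ K) {α : ℝ} (hα : α ∈ Set.Icc (0 : ℝ) 1) :
    |f α - (α * f 1 + (1 - α) * f 0)| ≤ K / 8 := by
  have hK0 : 0 ≤ K := (abs_nonneg _).trans (hK α hα)
  have h1 := le_chord_add_of_neg_le_deriv2 hf hf' (fun x hx => (abs_le.1 (hK x hx)).1) hK0 hα
  have h2 := le_chord_add_of_neg_le_deriv2 (fun x => (hf x).neg) (fun x => (hf' x).neg)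
    (fun x hx => neg_le_neg (abs_le.1 (hK x hx)).2) hK0 hα
  simp only [Pi.neg_apply] at h2
  rw [abs_le]
  constructor <;> linarith

/-! ### Softmax averages along a line of logits -/

/-- The average of `g` under the softmax weights with logits `a + x b`. -/
noncomputable def softAvg {T : ℕ} (a b g : Fin T → ℝ) (x : ℝ) : ℝ :=
  (∑ s, Real.exp (a s + x * b s) * g s) / ∑ s, Real.exp (a s + x * b s)

lemma sum_exp_pos {T : ℕ} [NeZero T] (v : Fin T → ℝ) : 0 < ∑ s, Real.exp (v s) :=
  Finset.sum_pos (fun _ _ => Real.exp_pos _) ⟨0, Finset.mem_univ _⟩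

lemma abs_softAvg_le {T : ℕ} [NeZero T] (a b : Fin T → ℝ) {g : Fin T → ℝ} {G : ℝ}
    (hg : ∀ s, |g s| ≤ G) (x : ℝ) : |softAvg a b g x| ≤ G := by
  have hZ := sum_exp_pos fun s => a s + x * b s
  rw [softAvg, abs_div, abs_of_pos hZ, div_le_iff₀ hZ, Finset.mul_sum]
  refine (Finset.abs_sum_le_sum_abs _ _).trans (Finset.sum_le_sum fun s _ => ?_)
  rw [abs_mul, abs_of_pos (Real.exp_pos _), mul_comm]
  exact mul_le_mul_of_nonneg_right (hg s) (Real.exp_pos _).le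

/-- The derivative of a softmax average is a covariance with the direction of the logits. -/
lemma hasDerivAt_softAvg {T : ℕ} [NeZero T] (a b g : Fin T → ℝ) (x : ℝ) :
    HasDerivAt (softAvg a b g)
      (softAvg a b (fun s => b s * g s) x - softAvg a b b x * softAvg a b g x) x := by
  have he : ∀ s, HasDerivAt (fun x => Real.exp (a s + x * b s))
      (Real.exp (a s + x * b s) * b s) x := fun s => by
    refine (((hasDerivAt_id x).mul_const (b s)).const_add (a s)).exp.congr_deriv ?_
    simp
  have hN : HasDerivAt (fun x => ∑ s, Real.exp (a s + x * b s) * g s)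
      (∑ s, Real.exp (a s + x * b s) * b s * g s) x :=
    HasDerivAt.fun_sum fun s _ => (he s).mul_const (g s)
  have hD : HasDerivAt (fun x => ∑ s, Real.exp (a s + x * b s))
      (∑ s, Real.exp (a s + x * b s) * b s) x :=
    HasDerivAt.fun_sum fun s _ => he s
  have hZ := (sum_exp_pos fun s => a s + x * b s).ne'
  refine (hN.div hD hZ).congr_deriv ?_
  simp only [softAvg, mul_assoc]
  field_simp

/-- Along `x ↦ E_x[c + x v]`, where `E_x` is the softmax average with logits `a + x b`, the second
derivative is `κ₃(b, b, c + x v) + 2 Cov(b, v)`, which bounds the deviation from the chord. -/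
lemma softAvg_chord {T : ℕ} [NeZero T] (a b c v : Fin T → ℝ) {B C V : ℝ}
    (hB : ∀ s, |b s| ≤ B) (hC : ∀ x ∈ Set.Icc (0 : ℝ) 1, ∀ s, |c s + x * v s| ≤ C)
    (hV : ∀ s, |v s| ≤ V) {α : ℝ} (hα : α ∈ Set.Icc (0 : ℝ) 1) :
    |softAvg a b (fun s => c s + α * v s) α -
      (α * softAvg a b (fun s => c s + v s) 1 + (1 - α) * softAvg a b c 0)|
        ≤ (6 * B ^ 2 * C + 4 * B * V) / 8 := by
  have hB0 : 0 ≤ B := (abs_nonneg _).trans (hB 0)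
  have hC0 : 0 ≤ C := (abs_nonneg _).trans (hC α hα 0)
  have hV0 : 0 ≤ V := (abs_nonneg _).trans (hV 0)
  set E : (Fin T → ℝ) → ℝ → ℝ := fun g => softAvg a b g with hE
  have hd : ∀ g x, HasDerivAt (E g) (E (fun s => b s * g s) x - E b x * E g x) x :=
    hasDerivAt_softAvg a b
  have hlin : ∀ (g k : Fin T → ℝ) (r x : ℝ), E (fun s => g s + r * k s) x = E g x + r * E k x := by
    intro g k r x
    simp only [hE, softAvg, mul_add, Finset.sum_add_distrib, add_div, mul_div_assoc']
    congr 2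
    rw [Finset.mul_sum]
    exact Finset.sum_congr rfl fun s _ => by ring
  -- the covariance `Cov(b, g)` and its derivative, the third mixed cumulant `κ₃(b, b, g)`
  set cov : (Fin T → ℝ) → ℝ → ℝ := fun g x => E (fun s => b s * g s) x - E b x * E g x with hcov
  set cum : (Fin T → ℝ) → ℝ → ℝ := fun g x =>
    (E (fun s => b s * (b s * g s)) x - E b x * E (fun s => b s * g s) x) -
      ((E (fun s => b s * b s) x - E b x * E b x) * E g x + E b x * cov g x) with hcum
  have hcd : ∀ g x, HasDerivAt (cov g) (cum g x) x := fun g x =>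
    (hd _ x).sub ((hd b x).mul (hd g x))
  have hf : ∀ x, HasDerivAt (fun x => E c x + x * E v x)
      (cov c x + (E v x + x * cov v x)) x := fun x => by
    refine ((hd c x).add ((hasDerivAt_id x).mul (hd v x))).congr_deriv ?_
    simp [hcov]
  have hf' : ∀ x, HasDerivAt (fun x => cov c x + (E v x + x * cov v x))
      (cum c x + (cov v x + (cov v x + x * cum v x))) x := fun x => by
    refine ((hcd c x).add ((hd v x).add ((hasDerivAt_id x).mul (hcd v x)))).congr_deriv ?_
    simp [hcov]
  have hb : ∀ {p q P Q : ℝ}, 0 ≤ P → |p| ≤ P → |q| ≤ Q → |p * q| ≤ P * Q := by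
    intro p q P Q hP hp hq
    rw [abs_mul]
    exact mul_le_mul hp hq (abs_nonneg _) hP
  have hEb : ∀ x, |E b x| ≤ B := abs_softAvg_le a b hB
  have hcovb : ∀ (g : Fin T → ℝ) (G x : ℝ), (∀ s, |g s| ≤ G) → |cov g x| ≤ 2 * (B * G) := by
    intro g G x hg
    have h1 : |E (fun s => b s * g s) x| ≤ B * G :=
      abs_softAvg_le a b (fun s => hb hB0 (hB s) (hg s)) x
    have h2 : |E b x * E g x| ≤ B * G := hb hB0 (hEb x) (abs_softAvg_le a b hg x)
    simp only [hcov]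
    linarith [abs_sub (E (fun s => b s * g s) x) (E b x * E g x)]
  have hcumb : ∀ (g : Fin T → ℝ) (G x : ℝ), (∀ s, |g s| ≤ G) → |cum g x| ≤ 6 * B ^ 2 * G := by
    intro g G x hg
    have hbb := hcovb (fun s => b s * g s) (B * G) x fun s => hb hB0 (hB s) (hg s)
    have h2 := hb (by positivity) (hcovb b B x hB) (abs_softAvg_le a b hg x)
    have h3 := hb hB0 (hEb x) (hcovb g G x hg)
    have h4 : cum g x = cov (fun s => b s * g s) x - (cov b x * E g x + E b x * cov g x) := rfl
    rw [h4]
    have h5 := abs_sub (cov (fun s => b s * g s) x) (cov b x * E g x + E b x * cov g x)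
    have h6 := abs_add_le (cov b x * E g x) (E b x * cov g x)
    nlinarith
  have hK : ∀ x ∈ Set.Icc (0 : ℝ) 1, |cum c x + (cov v x + (cov v x + x * cum v x))| ≤
      6 * B ^ 2 * C + 4 * B * V := by
    intro x hx
    have h1 := hcumb (fun s => c s + x * v s) C x (hC x hx)
    have h2 := hcovb v V x hV
    have hl1 : E (fun s => b s * (c s + x * v s)) x =
        E (fun s => b s * c s) x + x * E (fun s => b s * v s) x := by
      rw [← hlin]; congr 1; funext s; ring
    have hl2 : E (fun s => b s * (b s * (c s + x * v s))) x =
        E (fun s => b s * (b s * c s)) x + x * E (fun s => b s * (b s * v s)) x := by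
      rw [← hlin]; congr 1; funext s; ring
    have h3 : cum c x + (cov v x + (cov v x + x * cum v x)) =
        cum (fun s => c s + x * v s) x + 2 * cov v x := by
      simp only [hcum, hcov, hl1, hl2, hlin]
      ring
    rw [h3]
    refine (abs_add_le _ _).trans ?_
    rw [abs_mul, abs_two]
    linarith
  have hmain := abs_sub_chord_le hf hf' hK hα
  have e1 : E (fun s => c s + v s) 1 = E c 1 + 1 * E v 1 := by
    rw [← hlin]; simp
  have e0 : E c 0 = E c 0 + 0 * E v 0 := by ring
  change |E (fun s => c s + α * v s) α - (α * E (fun s => c s + v s) 1 + (1 - α) * E c 0)| ≤ _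
  rw [hlin, e1, e0]
  simpa using hmain

/-! ### The logistic loss -/

lemma convexOn_logistic : ConvexOn ℝ Set.univ fun z : ℝ => Real.log (1 + Real.exp (-z)) := by
  have hd : ∀ z : ℝ, HasDerivAt (fun z : ℝ => Real.log (1 + Real.exp (-z)))
      (-(1 / (1 + Real.exp z))) z := fun z => by
    have h := (((hasDerivAt_neg z).exp).const_add 1).log (by positivity)
    refine h.congr_deriv ?_
    have := Real.exp_pos z
    rw [Real.exp_neg]
    field_simp
    ring
  refine Monotone.convexOn_univ_of_deriv (fun z => (hd z).differentiableAt) ?_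
  rw [show deriv (fun z : ℝ => Real.log (1 + Real.exp (-z))) = fun z => -(1 / (1 + Real.exp z))
    from funext fun z => (hd z).deriv]
  intro z w hzw
  have := Real.exp_pos z
  exact neg_le_neg (one_div_le_one_div_of_le (by positivity)
    (by linarith [Real.exp_le_exp.2 hzw]))

/-- Lowering the margin by `1 / 8` inflates the logistic loss by a factor at most
`exp (1 / 8) ≤ 8 / 7 ≤ 4 / 3`; this is Bernoulli's inequality `1 + p u ≤ (1 + u) ^ p`. -/
lemma logistic_le_of_near {z w : ℝ} (h : w - 1 / 8 ≤ z) :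
    Real.log (1 + Real.exp (-z)) ≤ 4 / 3 * Real.log (1 + Real.exp (-w)) := by
  have hu := Real.exp_pos (-w)
  have h8 : Real.exp (1 / 8 : ℝ) ≤ 4 / 3 := by
    have := Real.exp_bound_div_one_sub_of_interval (x := 1 / 8) (by norm_num) (by norm_num)
    norm_num at this ⊢
    linarith
  have h1 : Real.exp (-z) ≤ 4 / 3 * Real.exp (-w) := by
    calc Real.exp (-z) ≤ Real.exp (1 / 8 + -w) := Real.exp_le_exp.2 (by linarith)
      _ = Real.exp (1 / 8) * Real.exp (-w) := Real.exp_add _ _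
      _ ≤ _ := mul_le_mul_of_nonneg_right h8 hu.le
  have h2 := one_add_mul_self_le_rpow_one_add (s := Real.exp (-w)) (by linarith)
    (p := 4 / 3) (by norm_num)
  rw [← Real.log_rpow (by positivity)]
  exact Real.log_le_log (by positivity) (by linarith)

/-! ### Second-order control of one attention head -/

lemma abs_sum_mul_le_sqrt {ι : Type*} [Fintype ι] (f g : ι → ℝ) {R : ℝ}
    (hg : √(∑ i, g i ^ 2) ≤ R) : |∑ i, f i * g i| ≤ R * √(∑ i, f i ^ 2) := by
  calc |∑ i, f i * g i| ≤ √((∑ i, f i ^ 2) * ∑ i, g i ^ 2) :=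
        Real.abs_le_sqrt (Finset.sum_mul_sq_le_sq_mul_sq _ _ _)
    _ = √(∑ i, g i ^ 2) * √(∑ i, f i ^ 2) := by
        rw [Real.sqrt_mul (by positivity), mul_comm]
    _ ≤ _ := mul_le_mul_of_nonneg_right hg (Real.sqrt_nonneg _)

lemma abs_attnScores_le {T d : ℕ} {X : Fin T → Fin d → ℝ} {R : ℝ} (hR : 0 ≤ R)
    (hX : ∀ t, √(∑ j, X t j ^ 2) ≤ R) (W : Fin d → Fin d → ℝ) (t s : Fin T) :
    |attnScores X W t s| ≤ R ^ 2 * √(∑ p : Fin d × Fin d, W p.1 p.2 ^ 2) := by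
  have h1 : attnScores X W t s =
      ∑ p : Fin d × Fin d, W p.1 p.2 * (X t p.1 * X s p.2) := by
    rw [attnScores, Fintype.sum_prod_type]
    exact Finset.sum_congr rfl fun j _ => Finset.sum_congr rfl fun k _ => by ring
  have h2 : ∑ p : Fin d × Fin d, (X t p.1 * X s p.2) ^ 2 =
      (∑ j, X t j ^ 2) * ∑ k, X s k ^ 2 := by
    rw [Fintype.sum_prod_type, Finset.sum_mul_sum]
    exact Finset.sum_congr rfl fun j _ => Finset.sum_congr rfl fun k _ => by ring
  rw [h1]
  refine abs_sum_mul_le_sqrt (fun p : Fin d × Fin d => W p.1 p.2) _ ?_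
  rw [h2, Real.sqrt_mul (by positivity), sq]
  exact mul_le_mul (hX t) (hX s) (Real.sqrt_nonneg _) hR

/-- Cauchy–Schwarz over tokens: the row norms of a `T × d` matrix sum to at most `√T` times its
Frobenius norm. -/
lemma sum_row_norm_le {T d : ℕ} (U : Fin T → Fin d → ℝ) :
    ∑ t, √(∑ j, U t j ^ 2) ≤ √T * √(∑ p : Fin T × Fin d, U p.1 p.2 ^ 2) := by
  rw [← Real.sqrt_mul (by positivity)]
  refine Real.le_sqrt_of_sq_le ?_
  refine sq_sum_le_card_mul_sum_sq.trans_eq ?_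
  rw [Fintype.sum_prod_type, Finset.card_univ, Fintype.card_fin]
  congr 1
  exact Finset.sum_congr rfl fun t _ => Real.sq_sqrt (by positivity)

/-- A head evaluated along a segment of parameters, as a sum of softmax averages over the query
tokens. -/
lemma attnPhi_line {T d : ℕ} (X U U' : Fin T → Fin d → ℝ) (W W' : Fin d → Fin d → ℝ) (x : ℝ) :
    attnPhi X (fun t j => U t j + x * U' t j) (fun j k => W j k + x * W' j k) =
      ∑ t, softAvg (attnScores X W t) (attnScores X W' t)
        (fun s => ∑ j, U t j * X s j + x * ∑ j, U' t j * X s j) x := by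
  have hs : ∀ t s, attnScores X (fun j k => W j k + x * W' j k) t s =
      attnScores X W t s + x * attnScores X W' t s := by
    intro t s
    simp only [attnScores, Finset.mul_sum, ← Finset.sum_add_distrib]
    exact Finset.sum_congr rfl fun j _ => Finset.sum_congr rfl fun k _ => by ring
  refine Finset.sum_congr rfl fun t _ => ?_
  rw [softAvg, Finset.sum_div]
  refine Finset.sum_congr rfl fun s _ => ?_
  have hl : ∑ j, (U t j + x * U' t j) * X s j =
      ∑ j, U t j * X s j + x * ∑ j, U' t j * X s j := by
    rw [Finset.mul_sum, ← Finset.sum_add_distrib]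
    exact Finset.sum_congr rfl fun j _ => by ring
  simp only [smax, hs, hl]
  ring

/-- Deviation of a single head from its chord, in terms of the Frobenius norms of the endpoints'
value matrices and of the increments. -/
lemma attnPhi_chord {T d : ℕ} {X : Fin T → Fin d → ℝ} {R : ℝ} (hR : 0 ≤ R)
    (hX : ∀ t, √(∑ j, X t j ^ 2) ≤ R) (U1 U2 : Fin T → Fin d → ℝ) (W1 W2 : Fin d → Fin d → ℝ)
    {α : ℝ} (hα : α ∈ Set.Icc (0 : ℝ) 1) :
    |attnPhi X (fun t j => α * U1 t j + (1 - α) * U2 t j)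
        (fun j k => α * W1 j k + (1 - α) * W2 j k) -
      (α * attnPhi X U1 W1 + (1 - α) * attnPhi X U2 W2)| ≤
    √T * R ^ 3 / 8 *
      (6 * R ^ 2 * √(∑ p : Fin d × Fin d, (W1 p.1 p.2 - W2 p.1 p.2) ^ 2) ^ 2 *
          (√(∑ p : Fin T × Fin d, U1 p.1 p.2 ^ 2) + √(∑ p : Fin T × Fin d, U2 p.1 p.2 ^ 2)) +
        4 * √(∑ p : Fin d × Fin d, (W1 p.1 p.2 - W2 p.1 p.2) ^ 2) *
          √(∑ p : Fin T × Fin d, (U1 p.1 p.2 - U2 p.1 p.2) ^ 2)) := by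
  set z := √(∑ p : Fin d × Fin d, (W1 p.1 p.2 - W2 p.1 p.2) ^ 2) with hz
  have hz0 : 0 ≤ z := Real.sqrt_nonneg _
  have hline := attnPhi_line X U2 (fun t j => U1 t j - U2 t j) W2 (fun j k => W1 j k - W2 j k)
  have eα : attnPhi X (fun t j => α * U1 t j + (1 - α) * U2 t j)
        (fun j k => α * W1 j k + (1 - α) * W2 j k) = _ :=
    Eq.trans (by congr 1 <;> (funext i j; ring)) (hline α)
  have e1 : attnPhi X U1 W1 = _ :=
    Eq.trans (by congr 1 <;> (funext i j; ring)) (hline 1)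
  have e0 : attnPhi X U2 W2 = _ :=
    Eq.trans (by congr 1 <;> (funext i j; ring)) (hline 0)
  rw [eα, e1, e0, Finset.mul_sum, Finset.mul_sum, ← Finset.sum_add_distrib,
    ← Finset.sum_sub_distrib]
  have htok : ∀ t, |softAvg (attnScores X W2 t) (attnScores X (fun j k => W1 j k - W2 j k) t)
        (fun s => ∑ j, U2 t j * X s j + α * ∑ j, (U1 t j - U2 t j) * X s j) α -
      (α * softAvg (attnScores X W2 t) (attnScores X (fun j k => W1 j k - W2 j k) t)
        (fun s => ∑ j, U2 t j * X s j + 1 * ∑ j, (U1 t j - U2 t j) * X s j) 1 +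
      (1 - α) * softAvg (attnScores X W2 t) (attnScores X (fun j k => W1 j k - W2 j k) t)
        (fun s => ∑ j, U2 t j * X s j + 0 * ∑ j, (U1 t j - U2 t j) * X s j) 0)| ≤
      (6 * (R ^ 2 * z) ^ 2 * (R * √(∑ j, U1 t j ^ 2) + R * √(∑ j, U2 t j ^ 2)) +
        4 * (R ^ 2 * z) * (R * √(∑ j, (U1 t j - U2 t j) ^ 2))) / 8 := by
    intro t
    have : NeZero T := ⟨fun h => by subst h; exact t.elim0⟩
    simp only [one_mul, zero_mul, add_zero]
    refine softAvg_chord _ _ (fun s => ∑ j, U2 t j * X s j)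
      (fun s => ∑ j, (U1 t j - U2 t j) * X s j)
      (fun s => abs_attnScores_le hR hX _ t s) (fun x hx s => ?_)
      (fun s => abs_sum_mul_le_sqrt _ _ (hX s)) hα
    have h1 := abs_sum_mul_le_sqrt (U1 t) _ (hX s)
    have h2 := abs_sum_mul_le_sqrt (U2 t) _ (hX s)
    have h3 : ∑ j, U2 t j * X s j + x * ∑ j, (U1 t j - U2 t j) * X s j =
        x * (∑ j, U1 t j * X s j) + (1 - x) * ∑ j, U2 t j * X s j := by
      simp only [sub_mul, Finset.sum_sub_distrib]
      ring
    have hx0 := hx.1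
    have hx1 := sub_nonneg.2 hx.2
    rw [h3]
    refine (abs_add_le _ _).trans (add_le_add ?_ ?_)
    · rw [abs_mul, abs_of_nonneg hx0]
      exact (mul_le_of_le_one_left (abs_nonneg _) hx.2).trans h1
    · rw [abs_mul, abs_of_nonneg hx1]
      exact (mul_le_of_le_one_left (abs_nonneg _) (by linarith)).trans h2
  refine (Finset.abs_sum_le_sum_abs _ _).trans ((Finset.sum_le_sum fun t _ => htok t).trans ?_)
  have s1 := sum_row_norm_le U1
  have s2 := sum_row_norm_le U2
  have s3 := sum_row_norm_le fun t j => U1 t j - U2 t j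
  have hsum : ∑ t, (6 * (R ^ 2 * z) ^ 2 * (R * √(∑ j, U1 t j ^ 2) + R * √(∑ j, U2 t j ^ 2)) +
        4 * (R ^ 2 * z) * (R * √(∑ j, (U1 t j - U2 t j) ^ 2))) / 8 =
      R ^ 3 / 8 * (6 * R ^ 2 * z ^ 2) * (∑ t, √(∑ j, U1 t j ^ 2) + ∑ t, √(∑ j, U2 t j ^ 2)) +
        R ^ 3 / 8 * (4 * z) * ∑ t, √(∑ j, (U1 t j - U2 t j) ^ 2) := by
    rw [← Finset.sum_add_distrib, Finset.mul_sum, Finset.mul_sum, ← Finset.sum_add_distrib]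
    exact Finset.sum_congr rfl fun t _ => by ring
  rw [hsum]
  refine (add_le_add (mul_le_mul_of_nonneg_left (add_le_add s1 s2) (by positivity))
    (mul_le_mul_of_nonneg_left s3 (by positivity))).trans_eq ?_
  ring

/-! ### The multi-head model -/

/-- The squared Euclidean norm of the `h`-th head. -/
noncomputable def headSq {T d H : ℕ} (θ : Params T d H) (h : Fin H) : ℝ :=
  ∑ p : HeadIx T d, θ (h, p) ^ 2

lemma headSq_eq {T d H : ℕ} (θ : Params T d H) (h : Fin H) :
    headSq θ h = ∑ p : Fin T × Fin d, headU θ h p.1 p.2 ^ 2 +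
      ∑ p : Fin d × Fin d, headW θ h p.1 p.2 ^ 2 := by
  simp only [headSq, Fintype.sum_sum_type]
  rfl

lemma sqrt_headU_le {T d H : ℕ} (θ : Params T d H) (h : Fin H) :
    √(∑ p : Fin T × Fin d, headU θ h p.1 p.2 ^ 2) ≤ maxHeadNorm θ := by
  refine (Real.sqrt_le_sqrt ?_).trans (le_ciSup
    (f := fun h : Fin H => √(∑ p : HeadIx T d, θ (h, p) ^ 2)) (Set.finite_range _).bddAbove h)
  change _ ≤ headSq θ h
  rw [headSq_eq]
  exact le_add_of_nonneg_right (by positivity)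

lemma maxHeadNorm_nonneg {T d H : ℕ} (θ : Params T d H) : 0 ≤ maxHeadNorm θ :=
  Real.iSup_nonneg fun _ => Real.sqrt_nonneg _

lemma sum_headSq {T d H : ℕ} (θ : Params T d H) : ∑ h, headSq θ h = ‖θ‖ ^ 2 := by
  rw [EuclideanSpace.real_norm_sq_eq, Fintype.sum_prod_type]
  rfl

lemma le_beta3 {T d H : ℕ} (hd : 1 ≤ d) {R : ℝ} (hR : 1 ≤ R) (θ : Params T d H) :
    2 * √T * R ^ 3 * (3 * R ^ 2 * maxHeadNorm θ + 1) ≤ beta3 R θ := by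
  have hM := maxHeadNorm_nonneg θ
  have hd1 : (1 : ℝ) ≤ d := by exact_mod_cast hd
  have hsd : 1 ≤ √(d : ℝ) := Real.one_le_sqrt.2 hd1
  have hR0 : 0 ≤ R := by linarith
  have h1 : 2 * √(T : ℝ) * R ^ 3 ≤ 2 * (d : ℝ) * √((T : ℝ) * d) * R ^ 3 := by
    refine mul_le_mul_of_nonneg_right ?_ (by positivity)
    rw [Real.sqrt_mul (by positivity)]
    have hT := Real.sqrt_nonneg (T : ℝ)
    have h2 : 1 ≤ (d : ℝ) * √(d : ℝ) := one_le_mul_of_one_le_of_one_le hd1 hsd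
    nlinarith [mul_le_mul_of_nonneg_left h2 hT]
  have h2 : 3 * R ^ 2 * maxHeadNorm θ + 1 ≤ 3 * √(d : ℝ) * R ^ 2 * maxHeadNorm θ + 1 := by
    nlinarith [mul_le_mul_of_nonneg_right hsd (by positivity : 0 ≤ R ^ 2 * maxHeadNorm θ)]
  exact mul_le_mul h1 h2 (by positivity) (by positivity)

/-- Under the closeness condition the model deviates from its chord by at most `1 / 8`. -/
lemma mhPhi_chord {T d H : ℕ} {X : Fin T → Fin d → ℝ} {R : ℝ} (hR : 1 ≤ R)
    (hX : ∀ t, √(∑ j, X t j ^ 2) ≤ R) (θ1 θ2 : Params T d H)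
    (hclose : 2 * max (beta3 R θ1) (beta3 R θ2) * ‖θ1 - θ2‖ ^ 2 ≤ √H)
    {α : ℝ} (hα : α ∈ Set.Icc (0 : ℝ) 1) :
    |mhPhi X (α • θ1 + (1 - α) • θ2) - (α * mhPhi X θ1 + (1 - α) * mhPhi X θ2)| ≤ 1 / 8 := by
  have hR0 : 0 ≤ R := by linarith
  -- `β₃` vanishes for `d = 0`, and so does the model
  rcases Nat.eq_zero_or_pos d with rfl | hd
  · simp [mhPhi, attnPhi]
  rcases Nat.eq_zero_or_pos H with rfl | hH
  · simp [mhPhi]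
  have hH0 : 0 < √(H : ℝ) := Real.sqrt_pos.2 (by exact_mod_cast hH)
  set M1 := maxHeadNorm θ1
  set M2 := maxHeadNorm θ2
  have hM1 : 0 ≤ M1 := maxHeadNorm_nonneg θ1
  have hM2 : 0 ≤ M2 := maxHeadNorm_nonneg θ2
  have hhead : ∀ h, |attnPhi X (headU (α • θ1 + (1 - α) • θ2) h)
        (headW (α • θ1 + (1 - α) • θ2) h) -
      (α * attnPhi X (headU θ1 h) (headW θ1 h) +
        (1 - α) * attnPhi X (headU θ2 h) (headW θ2 h))| ≤
      √T * R ^ 3 / 8 * (6 * R ^ 2 * (M1 + M2) + 2) * headSq (θ1 - θ2) h := by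
    intro h
    refine (attnPhi_chord hR0 hX (headU θ1 h) (headU θ2 h) (headW θ1 h) (headW θ2 h) hα).trans ?_
    have hsq : headSq (θ1 - θ2) h =
        ∑ p : Fin T × Fin d, (headU θ1 h p.1 p.2 - headU θ2 h p.1 p.2) ^ 2 +
        ∑ p : Fin d × Fin d, (headW θ1 h p.1 p.2 - headW θ2 h p.1 p.2) ^ 2 := headSq_eq _ h
    have hu1 := sqrt_headU_le θ1 h
    have hu2 := sqrt_headU_le θ2 h
    rw [mul_assoc (√(T : ℝ) * R ^ 3 / 8)]
    refine mul_le_mul_of_nonneg_left ?_ (by positivity)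
    have hv2 := Real.sq_sqrt (show
      0 ≤ ∑ p : Fin T × Fin d, (headU θ1 h p.1 p.2 - headU θ2 h p.1 p.2) ^ 2 by positivity)
    have hz2 := Real.sq_sqrt (show
      0 ≤ ∑ p : Fin d × Fin d, (headW θ1 h p.1 p.2 - headW θ2 h p.1 p.2) ^ 2 by positivity)
    rw [← hv2, ← hz2] at hsq
    rw [hsq]
    set z := √(∑ p : Fin d × Fin d, (headW θ1 h p.1 p.2 - headW θ2 h p.1 p.2) ^ 2)
    set v := √(∑ p : Fin T × Fin d, (headU θ1 h p.1 p.2 - headU θ2 h p.1 p.2) ^ 2)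
    have hA : 6 * R ^ 2 * z ^ 2 * (√(∑ p : Fin T × Fin d, headU θ1 h p.1 p.2 ^ 2) +
        √(∑ p : Fin T × Fin d, headU θ2 h p.1 p.2 ^ 2)) ≤ 6 * R ^ 2 * z ^ 2 * (M1 + M2) :=
      mul_le_mul_of_nonneg_left (add_le_add hu1 hu2) (by positivity)
    have hB : 0 ≤ 6 * R ^ 2 * (M1 + M2) * v ^ 2 := by positivity
    nlinarith [sq_nonneg (z - v)]
  have hsum : |∑ h, (attnPhi X (headU (α • θ1 + (1 - α) • θ2) h)
        (headW (α • θ1 + (1 - α) • θ2) h) -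
      (α * attnPhi X (headU θ1 h) (headW θ1 h) +
        (1 - α) * attnPhi X (headU θ2 h) (headW θ2 h)))| ≤ √H / 8 := by
    refine (Finset.abs_sum_le_sum_abs _ _).trans ((Finset.sum_le_sum fun h _ => hhead h).trans ?_)
    rw [← Finset.mul_sum, sum_headSq]
    have hb1 := le_beta3 hd hR θ1
    have hb2 := le_beta3 hd hR θ2
    have hm1 := le_max_left (beta3 R θ1) (beta3 R θ2)
    have hm2 := le_max_right (beta3 R θ1) (beta3 R θ2)
    have hT : 0 ≤ √(T : ℝ) * R ^ 3 := by positivity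
    have hcoef : √(T : ℝ) * R ^ 3 / 8 * (6 * R ^ 2 * (M1 + M2) + 2) ≤
        2 * max (beta3 R θ1) (beta3 R θ2) / 8 := by
      have : √(T : ℝ) * R ^ 3 / 8 * (6 * R ^ 2 * (M1 + M2) + 2) =
        (2 * √(T : ℝ) * R ^ 3 * (3 * R ^ 2 * M1 + 1) + 2 * √(T : ℝ) * R ^ 3 * (3 * R ^ 2 * M2 + 1)
          - 2 * (√(T : ℝ) * R ^ 3)) / 8 := by ring
      rw [this]
      linarith
    have := mul_le_mul_of_nonneg_right hcoef (sq_nonneg ‖θ1 - θ2‖)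
    linarith
  have heq : mhPhi X (α • θ1 + (1 - α) • θ2) - (α * mhPhi X θ1 + (1 - α) * mhPhi X θ2) =
      1 / √H * ∑ h, (attnPhi X (headU (α • θ1 + (1 - α) • θ2) h)
        (headW (α • θ1 + (1 - α) • θ2) h) -
      (α * attnPhi X (headU θ1 h) (headW θ1 h) +
        (1 - α) * attnPhi X (headU θ2 h) (headW θ2 h))) := by
    simp only [mhPhi, Finset.sum_sub_distrib, Finset.sum_add_distrib, ← Finset.mul_sum]
    ring
  rw [heq, abs_mul, abs_of_pos (by positivity : 0 < 1 / √(H : ℝ)), one_div, inv_mul_le_iff₀ hH0]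
  linarith

/-- **Generalized local quasi-convexity.** Under the bounded-data
assumption, if `θ̃₁, θ̃₂` satisfy `2 max{β₃(θ̃₁), β₃(θ̃₂)} ‖θ̃₁ − θ̃₂‖² ≤ √H`, then
`max_{θ̃ ∈ [θ̃₁, θ̃₂]} L̂(θ̃) ≤ (4/3) max{L̂(θ̃₁), L̂(θ̃₂)}`. -/
theorem empirical_risk_GLQC {T d H n : ℕ} (hn : 0 < n)
    (X : Fin n → Fin T → Fin d → ℝ) (y : Fin n → ℝ) (R : ℝ)
    (hdata : BoundedData X y R)
    (θ1 θ2 : Params T d H)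
    (hclose : 2 * max (beta3 R θ1) (beta3 R θ2) * ‖θ1 - θ2‖ ^ 2 ≤ Real.sqrt H) :
    ∀ α ∈ Set.Icc (0 : ℝ) 1,
      empLoss X y (α • θ1 + (1 - α) • θ2) ≤
        4 / 3 * max (empLoss X y θ1) (empLoss X y θ2) := by
  obtain ⟨hR, hy, hX⟩ := hdata
  intro α hα
  -- each sample loss is at most `4 / 3` times the chord of the sample losses
  have hi : ∀ i, Real.log (1 + Real.exp (-(y i * mhPhi (X i) (α • θ1 + (1 - α) • θ2)))) ≤
      4 / 3 * (α * Real.log (1 + Real.exp (-(y i * mhPhi (X i) θ1))) +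
        (1 - α) * Real.log (1 + Real.exp (-(y i * mhPhi (X i) θ2)))) := by
    intro i
    have hc := mhPhi_chord hR (hX i) θ1 θ2 hclose hα
    have hw : α * (y i * mhPhi (X i) θ1) + (1 - α) * (y i * mhPhi (X i) θ2) - 1 / 8 ≤
        y i * mhPhi (X i) (α • θ1 + (1 - α) • θ2) := by
      rw [abs_le] at hc
      rcases hy i with h | h <;> rw [h] <;> linarith [hc.1, hc.2]
    have hcv := convexOn_logistic.2 (Set.mem_univ (y i * mhPhi (X i) θ1))
      (Set.mem_univ (y i * mhPhi (X i) θ2)) hα.1 (sub_nonneg.2 hα.2) (by ring)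
    simp only [smul_eq_mul] at hcv
    linarith [logistic_le_of_near hw]
  have hchord : empLoss X y (α • θ1 + (1 - α) • θ2) ≤
      4 / 3 * (α * empLoss X y θ1 + (1 - α) * empLoss X y θ2) := by
    refine (mul_le_mul_of_nonneg_left (Finset.sum_le_sum fun i _ => hi i)
      (by positivity)).trans_eq ?_
    simp only [empLoss, ← Finset.mul_sum, Finset.sum_add_distrib]
    ring
  have h1 := mul_le_mul_of_nonneg_left (le_max_left (empLoss X y θ1) (empLoss X y θ2)) hα.1
  have h2 := mul_le_mul_of_nonneg_left (le_max_right (empLoss X y θ1) (empLoss X y θ2))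
    (sub_nonneg.2 hα.2)
  linarith
end
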